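/- arXiv:2510.25482 — 2 statements merged into one kernel-verified Lean document; each statement's English description precedes it below -/
import Mathlib

section
/- A complex matrix pencil is strictly equivalent to some skew-symmetric matrix pencil if and only if its Kronecker canonical form satisfies: (1) for every k and every μ ∈ ℂ, the number of blocks E_k(μ) is even; (2) for every k, the number of blocks E_k(∞) is even; (3) for every k, the number of blocks L_k equals the number of blocks L_kᵀ. -/
/-!
Basic framework: a complex `m × n` matrix pencil `A - λ B` is formalized as the
pair `(A, B)` of matrices.  We define strict equivalence, congruence,
skew-symmetry, orbits, direct sums, and the cover relations for the orbit
closure hierarchies (in the Euclidean topology).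
-/

open Matrix

noncomputable section

/-- An `m × n` complex matrix pencil `A - λ B`, formalized as the pair `(A, B)`. -/
abbrev Pencil (m n : ℕ) : Type :=
  Matrix (Fin m) (Fin n) ℂ × Matrix (Fin m) (Fin n) ℂ

namespace Pencil

/-- Strict equivalence of matrix pencils: `Q⁻¹ * A * R = C` and `Q⁻¹ * B * R = D`
for some invertible `Q`, `R`. -/
def StrictEquiv {m n : ℕ} (P Q : Pencil m n) : Prop :=
  ∃ (S : Matrix (Fin m) (Fin m) ℂ) (R : Matrix (Fin n) (Fin n) ℂ),
    IsUnit S ∧ IsUnit R ∧ S⁻¹ * P.1 * R = Q.1 ∧ S⁻¹ * P.2 * R = Q.2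

/-- The strict-equivalence orbit of a pencil. -/
def orbE {m n : ℕ} (P : Pencil m n) : Set (Pencil m n) :=
  {Q | StrictEquiv P Q}

/-- A pencil `A - λ B` is skew-symmetric if `Aᵀ = -A` and `Bᵀ = -B`. -/
def IsSkew {n : ℕ} (P : Pencil n n) : Prop :=
  P.1ᵀ = -P.1 ∧ P.2ᵀ = -P.2

/-- Congruence of (square) matrix pencils: `Sᵀ * A * S = C` and `Sᵀ * B * S = D`
for some invertible `S`. -/
def Congruent {n : ℕ} (P Q : Pencil n n) : Prop :=
  ∃ S : Matrix (Fin n) (Fin n) ℂ,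
    IsUnit S ∧ Sᵀ * P.1 * S = Q.1 ∧ Sᵀ * P.2 * S = Q.2

/-- The congruence orbit of a pencil. -/
def orbC {n : ℕ} (P : Pencil n n) : Set (Pencil n n) :=
  {Q | Congruent P Q}

/-- Direct (block-diagonal) sum of two pencils. -/
def dsum {m n p q : ℕ} (P : Pencil m n) (Q : Pencil p q) : Pencil (m + p) (n + q) :=
  ((fromBlocks P.1 0 0 Q.1).submatrix finSumFinEquiv.symm finSumFinEquiv.symm,
   (fromBlocks P.2 0 0 Q.2).submatrix finSumFinEquiv.symm finSumFinEquiv.symm)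

/-- Transport a pencil along equalities of its dimensions. -/
def cast {m n m' n' : ℕ} (hm : m = m') (hn : n = n') (P : Pencil m n) : Pencil m' n' :=
  (P.1.submatrix (finCongr hm.symm) (finCongr hn.symm),
   P.2.submatrix (finCongr hm.symm) (finCongr hn.symm))

/-- `orbE P1` covers `orbE P2` in the closure hierarchy of strict-equivalence
orbits: `P1` is not strictly equivalent to `P2`, `orbE P2 ⊆ closure (orbE P1)`,
and there is no intermediate orbit strictly between them. -/
def CoversE {m n : ℕ} (P1 P2 : Pencil m n) : Prop :=
  ¬ StrictEquiv P1 P2 ∧ orbE P2 ⊆ closure (orbE P1) ∧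
    ¬ ∃ P : Pencil m n, ¬ StrictEquiv P P1 ∧ ¬ StrictEquiv P P2 ∧
        orbE P ⊆ closure (orbE P1) ∧ orbE P2 ⊆ closure (orbE P)

/-- `orbC P1` covers `orbC P2` in the closure hierarchy of congruence orbits of
skew-symmetric pencils: `P1` is not congruent to `P2`,
`orbC P2 ⊆ closure (orbC P1)`, and there is no congruence orbit of a
skew-symmetric pencil strictly between them. -/
def CoversC {n : ℕ} (P1 P2 : Pencil n n) : Prop :=
  ¬ Congruent P1 P2 ∧ orbC P2 ⊆ closure (orbC P1) ∧
    ¬ ∃ P : Pencil n n, IsSkew P ∧ ¬ Congruent P P1 ∧ ¬ Congruent P P2 ∧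
        orbC P ⊆ closure (orbC P1) ∧ orbC P2 ⊆ closure (orbC P)

end Pencil

/-! Canonical building blocks. -/

/-- The `k × k` Jordan block `J_k(μ)`. -/
def Jmat (k : ℕ) (μ : ℂ) : Matrix (Fin k) (Fin k) ℂ :=
  Matrix.of fun i j => if (j : ℕ) = (i : ℕ) then μ else if (j : ℕ) = (i : ℕ) + 1 then 1 else 0

/-- The `k × (k+1)` matrix `F_k` with ones on the superdiagonal. -/
def Fmat (k : ℕ) : Matrix (Fin k) (Fin (k + 1)) ℂ :=
  Matrix.of fun i j => if (j : ℕ) = (i : ℕ) + 1 then 1 else 0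

/-- The `k × (k+1)` matrix `G_k` with ones on the diagonal. -/
def Gmat (k : ℕ) : Matrix (Fin k) (Fin (k + 1)) ℂ :=
  Matrix.of fun i j => if (j : ℕ) = (i : ℕ) then 1 else 0

/-- The Kronecker block `E_k(μ) = J_k(μ) - λ I_k`. -/
def Eblk (k : ℕ) (μ : ℂ) : Pencil k k := (Jmat k μ, 1)

/-- The Kronecker block `E_k(∞) = I_k - λ J_k(0)`. -/
def EInfblk (k : ℕ) : Pencil k k := (1, Jmat k 0)

/-- The Kronecker block `L_k = F_k - λ G_k`. -/
def Lblk (k : ℕ) : Pencil k (k + 1) := (Fmat k, Gmat k)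

/-- The Kronecker block `L_kᵀ = F_kᵀ - λ G_kᵀ`. -/
def LTblk (k : ℕ) : Pencil (k + 1) k := ((Fmat k)ᵀ, (Gmat k)ᵀ)

/-- The skew-symmetric matrix `[[0, X], [-Xᵀ, 0]]`. -/
def skewPair {p q : ℕ} (X : Matrix (Fin p) (Fin q) ℂ) :
    Matrix (Fin (p + q)) (Fin (p + q)) ℂ :=
  (fromBlocks 0 X (-Xᵀ) 0).submatrix finSumFinEquiv.symm finSumFinEquiv.symm

/-- The skew-symmetric canonical block `H_h(μ)` (size `2h × 2h`). -/
def Hblk (h : ℕ) (μ : ℂ) : Pencil (h + h) (h + h) :=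
  (skewPair (Jmat h μ), skewPair (1 : Matrix (Fin h) (Fin h) ℂ))

/-- The skew-symmetric canonical block `K_k = H_k(∞)` (size `2k × 2k`). -/
def Kblk (k : ℕ) : Pencil (k + k) (k + k) :=
  (skewPair (1 : Matrix (Fin k) (Fin k) ℂ), skewPair (Jmat k 0))

/-- The skew-symmetric canonical block `M_m` (size `(2m+1) × (2m+1)`). -/
def Mblk (m : ℕ) : Pencil (m + (m + 1)) (m + (m + 1)) :=
  (skewPair (Fmat m), skewPair (Gmat m))

/-! Kronecker canonical forms as multisets of block descriptors. -/

/-- Descriptor of a Kronecker canonical block. -/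
inductive KBlock : Type
  | E : ℕ → ℂ → KBlock        -- `E_k(μ)`, `μ ∈ ℂ`
  | Einf : ℕ → KBlock          -- `E_k(∞)`
  | L : ℕ → KBlock             -- `L_k`
  | LT : ℕ → KBlock            -- `L_kᵀ`

namespace KBlock

/-- Number of rows of a block. -/
def rows : KBlock → ℕ
  | E k _ => k
  | Einf k => k
  | L k => k
  | LT k => k + 1

/-- Number of columns of a block. -/
def cols : KBlock → ℕ
  | E k _ => k
  | Einf k => k
  | L k => k + 1
  | LT k => k

/-- The index of a block. -/
def idx : KBlock → ℕ
  | E k _ => k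
  | Einf k => k
  | L k => k
  | LT k => k

/-- A block is valid (may occur in a Kronecker canonical form) if Jordan blocks
have size at least one. -/
def valid : KBlock → Prop
  | E k _ => 1 ≤ k
  | Einf k => 1 ≤ k
  | L _ => True
  | LT _ => True

/-- The pencil corresponding to a block descriptor. -/
def toPencil : (b : KBlock) → Pencil b.rows b.cols
  | E k μ => Eblk k μ
  | Einf k => EInfblk k
  | L k => Lblk k
  | LT k => LTblk k

end KBlock

/-- The block `E_k(μ)` for an eigenvalue `μ ∈ ℂ ∪ {∞}`; `none` encodes `∞`. -/
def Eb : Option ℂ → ℕ → KBlock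
  | some μ, k => KBlock.E k μ
  | none, k => KBlock.Einf k

/-- Total number of rows of a list of blocks. -/
def rowsSum : List KBlock → ℕ
  | [] => 0
  | b :: t => b.rows + rowsSum t

/-- Total number of columns of a list of blocks. -/
def colsSum : List KBlock → ℕ
  | [] => 0
  | b :: t => b.cols + colsSum t

/-- The direct sum of the blocks in a list. -/
def pencilOfList : (l : List KBlock) → Pencil (rowsSum l) (colsSum l)
  | [] => (0, 0)
  | b :: t => Pencil.dsum b.toPencil (pencilOfList t)

/-- `s` is the multiset of blocks of a Kronecker canonical form of `P`, i.e. `P`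
is strictly equivalent to the direct sum of the blocks of `s`. -/
def RepresentsE {m n : ℕ} (P : Pencil m n) (s : Multiset KBlock) : Prop :=
  (∀ b ∈ s, b.valid) ∧
  ∃ (l : List KBlock) (hm : rowsSum l = m) (hn : colsSum l = n),
    (l : Multiset KBlock) = s ∧
    Pencil.StrictEquiv (Pencil.cast hm hn (pencilOfList l)) P

/-- Like `RepresentsE`, but also allowing degenerate (empty) blocks such as
`E_0(μ)` among the summands. -/
def WeakRepresentsE {m n : ℕ} (P : Pencil m n) (s : Multiset KBlock) : Prop :=
  ∃ (l : List KBlock) (hm : rowsSum l = m) (hn : colsSum l = n),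
    (l : Multiset KBlock) = s ∧
    Pencil.StrictEquiv (Pencil.cast hm hn (pencilOfList l)) P

open scoped Classical

/-!
A skew-symmetric pencil is a pair `(a, b)` of alternating forms. Both `a` and `b` vanish identically
on a chain `b x₀ = a x₁, b x₁ = a x₂, …`, so such a chain spans a totally isotropic subspace. If it
starts in the kernel of `a` and is extremal, duality produces a second chain paired perfectly with
it, and the sum of the two spans splits off orthogonally, with Gram matrices `[[0, X], [-Xᵀ, 0]]`
for a Kronecker block `X`. Hence every skew-symmetric pencil is equivalent to some
`[[0, X], [-Xᵀ, 0]]`, that is to `X ⊕ Xᵀ`, with `X` a direct sum of Kronecker blocks. Transposition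
fixes the blocks `E_k(μ)` and `E_k(∞)` and exchanges `L_k` with `L_kᵀ`, so the multisets of blocks
of the form `t + tᵀ` are those described by the parity conditions.
-/

/-- A pair `(A, B)` of matrices of the same shape, read as the pencil `A - λ B`; unlike in
`Pencil`, rows and columns may be indexed by any types. -/
abbrev MatrixPair (m n K : Type*) := Matrix m n K × Matrix m n K

namespace MatrixPair

/-- Strict equivalence of pairs of matrices. The index types may differ, so the transformation
matrices are accompanied by their two-sided inverses. -/
def Equivalent {m n m' n' K : Type*} [CommRing K] [Fintype m] [Fintype n] [Fintype m'] [Fintype n']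
    [DecidableEq m] [DecidableEq n] [DecidableEq m'] [DecidableEq n']
    (P : MatrixPair m n K) (Q : MatrixPair m' n' K) : Prop :=
  ∃ (S : Matrix m' m K) (S' : Matrix m m' K) (R : Matrix n n' K) (R' : Matrix n' n K),
    S * S' = 1 ∧ S' * S = 1 ∧ R * R' = 1 ∧ R' * R = 1 ∧ S * P.1 * R = Q.1 ∧ S * P.2 * R = Q.2

local infix:50 " ≈ₚ " => Equivalent

variable {m n m₁ n₁ m₂ n₂ m₃ n₃ K : Type*} [CommRing K]

/-- The block-diagonal sum of two pairs. -/
def dsum (P : MatrixPair m n K) (Q : MatrixPair m₁ n₁ K) : MatrixPair (m ⊕ m₁) (n ⊕ n₁) K :=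
  (fromBlocks P.1 0 0 Q.1, fromBlocks P.2 0 0 Q.2)

/-- The pair of transposed matrices. -/
def transpose (P : MatrixPair m n K) : MatrixPair n m K := (P.1ᵀ, P.2ᵀ)

/-- The skew-symmetric pair `[[0, X], [-Xᵀ, 0]]` built from a pair `X`. -/
def skew (X : MatrixPair m n K) : MatrixPair (m ⊕ n) (m ⊕ n) K :=
  (fromBlocks 0 X.1 (-X.1ᵀ) 0, fromBlocks 0 X.2 (-X.2ᵀ) 0)

theorem transpose_dsum (P : MatrixPair m n K) (Q : MatrixPair m₁ n₁ K) :
    (P.dsum Q).transpose = P.transpose.dsum Q.transpose := by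
  simp [dsum, transpose, fromBlocks_transpose]

theorem transpose_skew (X : MatrixPair m n K) : X.skew.transpose = -X.skew := by
  simp [skew, transpose, fromBlocks_transpose, fromBlocks_neg]

variable [Fintype m] [Fintype n] [Fintype m₁] [Fintype n₁] [Fintype m₂] [Fintype n₂]
  [Fintype m₃] [Fintype n₃] [DecidableEq m] [DecidableEq n] [DecidableEq m₁] [DecidableEq n₁]
  [DecidableEq m₂] [DecidableEq n₂] [DecidableEq m₃] [DecidableEq n₃]

theorem Equivalent.symm {P : MatrixPair m n K} {Q : MatrixPair m₁ n₁ K} :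
    P ≈ₚ Q → Q ≈ₚ P := by
  rintro ⟨S, S', R, R', hS, hS', hR, hR', h₁, h₂⟩
  have undo (A : Matrix m n K) : S' * (S * A * R) * R' = A := by
    rw [← Matrix.mul_assoc, ← Matrix.mul_assoc, hS', Matrix.one_mul, Matrix.mul_assoc, hR,
      Matrix.mul_one]
  exact ⟨S', S, R', R, hS', hS, hR', hR, h₁ ▸ undo _, h₂ ▸ undo _⟩

theorem Equivalent.trans {P : MatrixPair m n K} {Q : MatrixPair m₁ n₁ K} {T : MatrixPair m₂ n₂ K} :
    P ≈ₚ Q → Q ≈ₚ T → P ≈ₚ T := by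
  rintro ⟨S, S', R, R', hS, hS', hR, hR', h₁, h₂⟩ ⟨U, U', W, W', hU, hU', hW, hW', k₁, k₂⟩
  refine ⟨U * S, S' * U', R * W, W' * R', ?_, ?_, ?_, ?_, ?_, ?_⟩
  · rw [Matrix.mul_assoc, ← Matrix.mul_assoc S, hS, Matrix.one_mul, hU]
  · rw [Matrix.mul_assoc, ← Matrix.mul_assoc U', hU', Matrix.one_mul, hS']
  · rw [Matrix.mul_assoc, ← Matrix.mul_assoc W, hW, Matrix.one_mul, hR]
  · rw [Matrix.mul_assoc, ← Matrix.mul_assoc R', hR', Matrix.one_mul, hW']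
  · simp only [← k₁, ← h₁, Matrix.mul_assoc]
  · simp only [← k₂, ← h₂, Matrix.mul_assoc]

instance : Trans (Equivalent (m := m) (n := n) (m' := m₁) (n' := n₁) (K := K))
    (Equivalent (m' := m₂) (n' := n₂)) Equivalent :=
  ⟨Equivalent.trans⟩

theorem equivalent_submatrix (P : MatrixPair m n K) (e : m₁ ≃ m) (f : n₁ ≃ n) :
    P ≈ₚ ((P.1.submatrix e f, P.2.submatrix e f) : MatrixPair m₁ n₁ K) := by
  refine ⟨(1 : Matrix m m K).submatrix e id, (1 : Matrix m m K).submatrix id e,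
    (1 : Matrix n n K).submatrix id f, (1 : Matrix n n K).submatrix f id, ?_, ?_, ?_, ?_, ?_, ?_⟩
  case refine_2 => rw [Matrix.submatrix_mul_equiv, Matrix.mul_one, Matrix.submatrix_id_id]
  case refine_3 => rw [Matrix.submatrix_mul_equiv, Matrix.mul_one, Matrix.submatrix_id_id]
  all_goals ext; simp [Matrix.mul_apply, Matrix.one_apply]

theorem Equivalent.refl (P : MatrixPair m n K) : P ≈ₚ P :=
  P.equivalent_submatrix (Equiv.refl m) (Equiv.refl n)

theorem Equivalent.card_rows_eq [Nontrivial K] {P : MatrixPair m n K} {Q : MatrixPair m₁ n₁ K} :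
    P ≈ₚ Q → Fintype.card m = Fintype.card m₁ := by
  rintro ⟨S, S', -, -, hS, hS', -⟩
  exact Matrix.square_of_invertible S' S hS' hS

theorem Equivalent.card_cols_eq [Nontrivial K] {P : MatrixPair m n K} {Q : MatrixPair m₁ n₁ K} :
    P ≈ₚ Q → Fintype.card n = Fintype.card n₁ := by
  rintro ⟨-, -, R, R', -, -, hR, hR', -⟩
  exact Matrix.square_of_invertible R R' hR hR'

theorem Equivalent.transpose {P : MatrixPair m n K} {Q : MatrixPair m₁ n₁ K} :
    P ≈ₚ Q → P.transpose ≈ₚ Q.transpose := by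
  rintro ⟨S, S', R, R', hS, hS', hR, hR', h₁, h₂⟩
  refine ⟨Rᵀ, R'ᵀ, Sᵀ, S'ᵀ, ?_, ?_, ?_, ?_, ?_, ?_⟩ <;>
    simp only [MatrixPair.transpose, ← Matrix.transpose_mul, ← Matrix.mul_assoc, *,
      Matrix.transpose_one]

theorem Equivalent.dsum {P : MatrixPair m n K} {P' : MatrixPair m₁ n₁ K}
    {Q : MatrixPair m₂ n₂ K} {Q' : MatrixPair m₃ n₃ K} :
    P ≈ₚ P' → Q ≈ₚ Q' → P.dsum Q ≈ₚ P'.dsum Q' := by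
  rintro ⟨S, S', R, R', hS, hS', hR, hR', h₁, h₂⟩ ⟨U, U', W, W', hU, hU', hW, hW', k₁, k₂⟩
  refine ⟨fromBlocks S 0 0 U, fromBlocks S' 0 0 U', fromBlocks R 0 0 W, fromBlocks R' 0 0 W',
    ?_, ?_, ?_, ?_, ?_, ?_⟩ <;>
    simp [MatrixPair.dsum, fromBlocks_multiply, *]

theorem dsum_comm (P : MatrixPair m n K) (Q : MatrixPair m₁ n₁ K) : P.dsum Q ≈ₚ Q.dsum P := by
  convert (P.dsum Q).equivalent_submatrix (Equiv.sumComm _ _) (Equiv.sumComm _ _) using 1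
  ext (i | i) (j | j) <;> rfl

theorem dsum_assoc (P : MatrixPair m n K) (Q : MatrixPair m₁ n₁ K) (T : MatrixPair m₂ n₂ K) :
    (P.dsum Q).dsum T ≈ₚ P.dsum (Q.dsum T) := by
  convert ((P.dsum Q).dsum T).equivalent_submatrix (Equiv.sumAssoc _ _ _).symm
    (Equiv.sumAssoc _ _ _).symm using 1
  ext (i | i | i) (j | j | j) <;> rfl

theorem dsum_of_isEmpty [IsEmpty m] [IsEmpty n] (P : MatrixPair m n K) (Q : MatrixPair m₁ n₁ K) :
    P.dsum Q ≈ₚ Q :=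
  (P.dsum Q).equivalent_submatrix (Equiv.emptySum m m₁).symm (Equiv.emptySum n n₁).symm

theorem equivalent_of_isEmpty [IsEmpty m] [IsEmpty n] [IsEmpty m₁] [IsEmpty n₁]
    (P : MatrixPair m n K) (Q : MatrixPair m₁ n₁ K) : P ≈ₚ Q :=
  ⟨0, 0, 0, 0, Subsingleton.elim _ _, Subsingleton.elim _ _, Subsingleton.elim _ _,
    Subsingleton.elim _ _, Subsingleton.elim _ _, Subsingleton.elim _ _⟩

theorem dsum_transpose_equivalent_skew (X : MatrixPair m n K) : X.dsum X.transpose ≈ₚ X.skew := by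
  refine ⟨fromBlocks 1 0 0 (-1), fromBlocks 1 0 0 (-1), fromBlocks 0 1 1 0, fromBlocks 0 1 1 0,
    ?_, ?_, ?_, ?_, ?_, ?_⟩ <;>
    simp [dsum, transpose, skew, fromBlocks_multiply]

theorem Equivalent.skew {X : MatrixPair m n K} {Y : MatrixPair m₁ n₁ K} (h : X ≈ₚ Y) :
    X.skew ≈ₚ Y.skew :=
  calc
    X.skew ≈ₚ X.dsum X.transpose := X.dsum_transpose_equivalent_skew.symm
    _ ≈ₚ Y.dsum Y.transpose := h.dsum h.transpose
    _ ≈ₚ Y.skew := Y.dsum_transpose_equivalent_skew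

theorem dsum_skew (X : MatrixPair m n K) (Y : MatrixPair m₁ n₁ K) :
    X.skew.dsum Y.skew ≈ₚ (X.dsum Y).skew := by
  convert (X.skew.dsum Y.skew).equivalent_submatrix (Equiv.sumSumSumComm _ _ _ _)
    (Equiv.sumSumSumComm _ _ _ _) using 1
  ext ((i | i) | (i | i)) ((j | j) | (j | j)) <;> simp [skew, dsum]

end MatrixPair

open MatrixPair

local infix:50 " ≈ₚ " => MatrixPair.Equivalent

namespace Pencil

theorem strictEquiv_iff {m n : ℕ} {P Q : Pencil m n} : StrictEquiv P Q ↔ P ≈ₚ Q := by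
  constructor
  · rintro ⟨S, R, hS, hR, h₁, h₂⟩
    rw [Matrix.isUnit_iff_isUnit_det] at hS hR
    exact ⟨S⁻¹, S, R, R⁻¹, Matrix.nonsing_inv_mul _ hS, Matrix.mul_nonsing_inv _ hS,
      Matrix.mul_nonsing_inv _ hR, Matrix.nonsing_inv_mul _ hR, h₁, h₂⟩
  · rintro ⟨S, S', R, R', -, hS', hR, -, h₁, h₂⟩
    refine ⟨S', R, .of_mul_eq_one _ hS', .of_mul_eq_one _ hR, ?_⟩
    rw [Matrix.inv_eq_right_inv hS']
    exact ⟨h₁, h₂⟩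

theorem equivalent_cast {m n m' n' : ℕ} (hm : m = m') (hn : n = n') (P : Pencil m n) :
    P ≈ₚ P.cast hm hn :=
  equivalent_submatrix P (finCongr hm.symm) (finCongr hn.symm)

theorem dsum_equivalent {m n p q : ℕ} (P : Pencil m n) (Q : Pencil p q) :
    MatrixPair.dsum P Q ≈ₚ P.dsum Q :=
  equivalent_submatrix _ finSumFinEquiv.symm finSumFinEquiv.symm

theorem exists_isSkew_strictEquiv {m n k : ℕ} {P : Pencil k k} {X : Pencil m n}
    (h : P ≈ₚ skew X) : ∃ Q : Pencil k k, Q.IsSkew ∧ P.StrictEquiv Q := by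
  let e : Fin k ≃ Fin m ⊕ Fin n := Fintype.equivOfCardEq h.card_rows_eq
  refine ⟨((skew X).1.submatrix e e, (skew X).2.submatrix e e), ?_,
    strictEquiv_iff.2 (h.trans (equivalent_submatrix _ e e))⟩
  have h' := transpose_skew (K := ℂ) X
  exact ⟨congrArg (fun Q : MatrixPair _ _ ℂ ↦ Q.1.submatrix e e) h',
    congrArg (fun Q : MatrixPair _ _ ℂ ↦ Q.2.submatrix e e) h'⟩

end Pencil

namespace KBlock

/-- The descriptor of the transposed block, up to strict equivalence. -/
def transpose : KBlock → KBlock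
  | E k μ => E k μ
  | Einf k => Einf k
  | L k => LT k
  | LT k => L k

theorem transpose_involutive : Function.Involutive transpose := by
  rintro (_ | _ | _ | _) <;> rfl

theorem valid_transpose {b : KBlock} : b.transpose.valid ↔ b.valid := by
  cases b <;> rfl

theorem transpose_Jmat_submatrix_rev (k : ℕ) (μ : ℂ) :
    (Jmat k μ)ᵀ.submatrix Fin.revPerm Fin.revPerm = Jmat k μ := by
  ext i j
  have diag : (k : ℕ) - (i + 1) = k - (j + 1) ↔ (j : ℕ) = i := by lia
  have superdiag : (k : ℕ) - (i + 1) = k - (j + 1) + 1 ↔ (j : ℕ) = i + 1 := by lia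
  simp [Jmat, Fin.val_rev, diag, superdiag]

theorem transpose_Eblk_equivalent (k : ℕ) (μ : ℂ) :
    MatrixPair.transpose (Eblk k μ) ≈ₚ Eblk k μ := by
  convert equivalent_submatrix (MatrixPair.transpose (Eblk k μ)) Fin.revPerm Fin.revPerm using 1
  simp [MatrixPair.transpose, Eblk, transpose_Jmat_submatrix_rev]

theorem transpose_EInfblk_equivalent (k : ℕ) :
    MatrixPair.transpose (EInfblk k) ≈ₚ EInfblk k := by
  convert equivalent_submatrix (MatrixPair.transpose (EInfblk k)) Fin.revPerm Fin.revPerm using 1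
  simp [MatrixPair.transpose, EInfblk, transpose_Jmat_submatrix_rev]

theorem transpose_toPencil_equivalent :
    ∀ b : KBlock, MatrixPair.transpose b.toPencil ≈ₚ b.transpose.toPencil
  | E k μ => transpose_Eblk_equivalent k μ
  | Einf k => transpose_EInfblk_equivalent k
  | L _ => .refl _
  | LT _ => .refl _

end KBlock

instance : IsEmpty (Fin (rowsSum [])) := Fin.isEmpty

instance : IsEmpty (Fin (colsSum [])) := Fin.isEmpty

theorem dsum_pencilOfList_equivalent (b : KBlock) (l : List KBlock) :
    MatrixPair.dsum b.toPencil (pencilOfList l) ≈ₚ pencilOfList (b :: l) :=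
  Pencil.dsum_equivalent _ _

theorem pencilOfList_append_equivalent (l l' : List KBlock) :
    MatrixPair.dsum (pencilOfList l) (pencilOfList l') ≈ₚ pencilOfList (l ++ l') := by
  induction l with
  | nil => exact dsum_of_isEmpty _ _
  | cons b l ih =>
    calc
      MatrixPair.dsum (pencilOfList (b :: l)) (pencilOfList l')
        ≈ₚ (MatrixPair.dsum b.toPencil (pencilOfList l)).dsum (pencilOfList l') :=
          (dsum_pencilOfList_equivalent b l).symm.dsum (.refl _)
      _ ≈ₚ MatrixPair.dsum b.toPencil (MatrixPair.dsum (pencilOfList l) (pencilOfList l')) :=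
          dsum_assoc _ _ _
      _ ≈ₚ MatrixPair.dsum b.toPencil (pencilOfList (l ++ l')) := (Equivalent.refl _).dsum ih
      _ ≈ₚ pencilOfList (b :: l ++ l') := dsum_pencilOfList_equivalent b _

theorem pencilOfList_perm {l l' : List KBlock} (h : l.Perm l') :
    pencilOfList l ≈ₚ pencilOfList l' := by
  induction h with
  | nil => exact .refl _
  | cons b _ ih =>
    exact (dsum_pencilOfList_equivalent b _).symm.trans
      (((Equivalent.refl _).dsum ih).trans (dsum_pencilOfList_equivalent b _))
  | swap b c l =>
    have split (b c : KBlock) : (MatrixPair.dsum b.toPencil c.toPencil).dsum (pencilOfList l) ≈ₚ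
        pencilOfList (b :: c :: l) :=
      (dsum_assoc _ _ _).trans
        (((Equivalent.refl _).dsum (dsum_pencilOfList_equivalent c l)).trans
          (dsum_pencilOfList_equivalent b (c :: l)))
    exact (split c b).symm.trans (((dsum_comm _ _).dsum (.refl _)).trans (split b c))
  | trans _ _ ih ih' => exact ih.trans ih'

theorem transpose_pencilOfList_equivalent (l : List KBlock) :
    MatrixPair.transpose (pencilOfList l) ≈ₚ pencilOfList (l.map KBlock.transpose) := by
  induction l with
  | nil => exact .refl _
  | cons b l ih =>
    calc
      MatrixPair.transpose (pencilOfList (b :: l))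
        ≈ₚ (MatrixPair.dsum b.toPencil (pencilOfList l)).transpose :=
          (dsum_pencilOfList_equivalent b l).symm.transpose
      _ ≈ₚ (MatrixPair.transpose b.toPencil).dsum (MatrixPair.transpose (pencilOfList l)) :=
          transpose_dsum (K := ℂ) _ _ ▸ .refl _
      _ ≈ₚ MatrixPair.dsum b.transpose.toPencil (pencilOfList (l.map KBlock.transpose)) :=
          b.transpose_toPencil_equivalent.dsum ih
      _ ≈ₚ pencilOfList ((b :: l).map KBlock.transpose) := dsum_pencilOfList_equivalent _ _

theorem pencilOfList_append_map_transpose_equivalent (l : List KBlock) :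
    pencilOfList (l ++ l.map KBlock.transpose) ≈ₚ skew (pencilOfList l) :=
  calc
    pencilOfList (l ++ l.map KBlock.transpose)
      ≈ₚ MatrixPair.dsum (pencilOfList l) (pencilOfList (l.map KBlock.transpose)) :=
        (pencilOfList_append_equivalent _ _).symm
    _ ≈ₚ MatrixPair.dsum (pencilOfList l) (MatrixPair.transpose (pencilOfList l)) :=
        (Equivalent.refl _).dsum (transpose_pencilOfList_equivalent l).symm
    _ ≈ₚ skew (pencilOfList l) := dsum_transpose_equivalent_skew _

theorem representsE_coe_iff {m n : ℕ} {P : Pencil m n} {l : List KBlock} :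
    RepresentsE P l ↔ (∀ b ∈ l, b.valid) ∧ pencilOfList l ≈ₚ P := by
  refine and_congr Iff.rfl ⟨?_, fun h ↦ ?_⟩
  · rintro ⟨l', hm, hn, hl, h⟩
    calc
      pencilOfList l ≈ₚ pencilOfList l' := pencilOfList_perm (Multiset.coe_eq_coe.1 hl.symm)
      _ ≈ₚ (pencilOfList l').cast hm hn := Pencil.equivalent_cast hm hn _
      _ ≈ₚ P := Pencil.strictEquiv_iff.1 h
  · have hm : rowsSum l = m := by simpa using h.card_rows_eq
    have hn : colsSum l = n := by simpa using h.card_cols_eq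
    exact ⟨l, hm, hn, rfl,
      Pencil.strictEquiv_iff.2 ((Pencil.equivalent_cast hm hn _).symm.trans h)⟩

section Involution

variable {α : Type*} [DecidableEq α] {f : α → α}

theorem count_add_map_of_involutive (hf : f.Involutive) (s : Multiset α) (b : α) :
    (s + s.map f).count b = s.count b + s.count (f b) := by
  rw [Multiset.count_add, ← Multiset.count_map_eq_count' f s hf.injective (f b), hf b]

theorem exists_eq_add_map_of_involutive (hf : f.Involutive) (s : Multiset α)
    (hs : ∀ b, s.count (f b) = s.count b ∧ (f b = b → Even (s.count b))) :
    ∃ t, s = t + t.map f := by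
  induction s using Multiset.strongInductionOn with
  | ih s ih =>
  rcases s.empty_or_exists_mem with rfl | ⟨b, hb⟩
  · exact ⟨0, rfl⟩
  have hfb : f b ∈ s.erase b := by
    rw [← Multiset.count_pos] at hb ⊢
    obtain ⟨hcount, heven⟩ := hs b
    by_cases hfix : f b = b
    · obtain ⟨c, hc⟩ := heven hfix
      rw [hfix, Multiset.count_erase_self]
      lia
    · rwa [Multiset.count_erase_of_ne hfix, hcount]
  let u := (s.erase b).erase (f b)
  have hsu : s = u + (b ::ₘ f b ::ₘ 0) := by
    rw [Multiset.add_cons, Multiset.add_cons, add_zero, Multiset.cons_erase hfb,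
      Multiset.cons_erase hb]
  have hcount (c : α) :
      s.count c = u.count c + ((if c = b then 1 else 0) + if c = f b then 1 else 0) := by
    simp only [hsu, Multiset.count_add, Multiset.count_cons, Multiset.count_zero]
    lia
  obtain ⟨t, ht⟩ := ih u ((Multiset.erase_le _ _).trans_lt (Multiset.erase_lt.2 hb)) fun c ↦ by
    have h₁ : f c = b ↔ c = f b := ⟨fun h ↦ by rw [← h, hf], fun h ↦ by rw [h, hf]⟩
    have h₂ : f c = f b ↔ c = b := hf.injective.eq_iff
    grind [hs c, hcount c, hcount (f c)]
  refine ⟨b ::ₘ t, ?_⟩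
  rw [hsu, ht, Multiset.map_cons]
  ext c
  simp only [Multiset.count_add, Multiset.count_cons, Multiset.count_zero]
  lia

theorem exists_eq_add_map_iff_of_involutive (hf : f.Involutive) (s : Multiset α) :
    (∃ t, s = t + t.map f) ↔
      ∀ b, s.count (f b) = s.count b ∧ (f b = b → Even (s.count b)) := by
  refine ⟨?_, exists_eq_add_map_of_involutive hf s⟩
  rintro ⟨t, rfl⟩ b
  simp only [count_add_map_of_involutive hf, hf b, add_comm, true_and]
  exact fun hb ↦ ⟨t.count b, by rw [hb]⟩

end Involution

theorem exists_eq_add_map_transpose_iff (s : Multiset KBlock) :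
    (∃ t, s = t + t.map KBlock.transpose) ↔
      (∀ (k : ℕ) (μ : ℂ), Even (s.count (KBlock.E k μ))) ∧
      (∀ k : ℕ, Even (s.count (KBlock.Einf k))) ∧
      (∀ k : ℕ, s.count (KBlock.L k) = s.count (KBlock.LT k)) := by
  rw [exists_eq_add_map_iff_of_involutive KBlock.transpose_involutive]
  constructor
  · exact fun h ↦ ⟨fun k μ ↦ (h (.E k μ)).2 rfl, fun k ↦ (h (.Einf k)).2 rfl,
      fun k ↦ (h (.LT k)).1⟩
  · rintro ⟨hE, hI, hL⟩ (⟨k, μ⟩ | k | k | k)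
    · exact ⟨rfl, fun _ ↦ hE k μ⟩
    · exact ⟨rfl, fun _ ↦ hI k⟩
    · exact ⟨(hL k).symm, nofun⟩
    · exact ⟨hL k, nofun⟩

section Chains

open Finset.HasAntidiagonal (antidiagonal mem_antidiagonal)

variable {K V W : Type*} [Semiring K] [AddCommMonoid V] [AddCommMonoid W] [Module K V] [Module K W]

/-- The vectors `x₀, …, x_{n-1}` form a chain for the pencil `p - λ q`: each `q xᵢ` equals
`p xᵢ₊₁`. The values `xᵢ` with `i ≥ n` are junk. -/
def IsPencilChain (p q : V →ₗ[K] W) (n : ℕ) (x : ℕ → V) : Prop :=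
  ∀ i, i + 1 < n → q (x i) = p (x (i + 1))

/-- The convolution of a sequence of scalars with a sequence of vectors. Chains that start in
`ker p` are stable under this operation, which therefore serves to normalise them. -/
def seqConv (c : ℕ → K) (x : ℕ → V) (n : ℕ) : V :=
  ∑ ij ∈ antidiagonal n, c ij.1 • x ij.2

/-- The vectors `v` that start a chain `v = x₀, …, x_m` with `x_m ∈ S`. -/
def chainSpace (p q : V →ₗ[K] W) (S : Submodule K V) : ℕ → Submodule K V
  | 0 => S
  | m + 1 => ((chainSpace p q S m).map p).comap q

variable {p q : V →ₗ[K] W} {n : ℕ} {x : ℕ → V}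

theorem IsPencilChain.mono {m : ℕ} (hx : IsPencilChain p q n x) (hmn : m ≤ n) :
    IsPencilChain p q m x :=
  fun i hi ↦ hx i (hi.trans_le hmn)

theorem IsPencilChain.tail (hx : IsPencilChain p q (n + 1) x) :
    IsPencilChain p q n fun i ↦ x (i + 1) :=
  fun i hi ↦ hx (i + 1) (by lia)

theorem IsPencilChain.cons {v : V} (hx : IsPencilChain p q n x) (hv : q v = p (x 0)) :
    IsPencilChain p q (n + 1) fun i ↦ i.casesOn v x := by
  rintro (_ | i) hi
  · exact hv
  · exact hx i (by lia)

theorem seqConv_zero (c : ℕ → K) (x : ℕ → V) : seqConv c x 0 = c 0 • x 0 := by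
  simp [seqConv]

theorem map_seqConv (f : V →ₗ[K] W) (c : ℕ → K) (x : ℕ → V) (n : ℕ) :
    f (seqConv c x n) = seqConv c (fun i ↦ f (x i)) n := by
  simp [seqConv, map_sum]

theorem IsPencilChain.convolve (hx : IsPencilChain p q n x) (h₀ : p (x 0) = 0) (c : ℕ → K) :
    IsPencilChain p q n (seqConv c x) := by
  intro i hi
  rw [seqConv, seqConv, map_sum, map_sum, Finset.Nat.sum_antidiagonal_succ', map_smul, h₀,
    smul_zero, zero_add]
  refine Finset.sum_congr rfl fun jk hjk ↦ ?_
  rw [map_smul, map_smul, hx _ (by grind [mem_antidiagonal])]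

theorem mem_chainSpace_iff {S : Submodule K V} {m : ℕ} {v : V} :
    v ∈ chainSpace p q S m ↔ ∃ x, x 0 = v ∧ IsPencilChain p q (m + 1) x ∧ x m ∈ S := by
  induction m generalizing v with
  | zero =>
    constructor
    · exact fun hv ↦ ⟨fun _ ↦ v, rfl, fun i hi ↦ by lia, hv⟩
    · rintro ⟨x, rfl, -, hx⟩
      exact hx
  | succ m ih =>
    constructor
    · rintro ⟨w, hw, hwv⟩
      obtain ⟨x, rfl, hx, hS⟩ := ih.1 hw
      exact ⟨_, rfl, hx.cons hwv.symm, hS⟩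
    · rintro ⟨x, rfl, hx, hS⟩
      exact ⟨x 1, ih.2 ⟨_, rfl, hx.tail, hS⟩, (hx 0 (by lia)).symm⟩

theorem chainSpace_bot_of_ker_eq_bot (hq : LinearMap.ker q = ⊥) (m : ℕ) :
    chainSpace p q ⊥ m = ⊥ := by
  induction m with
  | zero => rfl
  | succ m ih => rw [chainSpace, ih, Submodule.map_bot, Submodule.comap_bot, hq]

end Chains

section Recombination

open Module

variable {K V W : Type*} [Field K] [AddCommGroup V] [AddCommGroup W] [Module K V] [Module K W]

theorem exists_eq_sum_range_of_finrank_lt [FiniteDimensional K V] (x : ℕ → V) :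
    ∃ m ≤ finrank K V, ∃ c : ℕ → K, x m = ∑ i ∈ Finset.range m, c i • x i := by
  by_contra! h
  have indep : ∀ k ≤ finrank K V + 1, LinearIndependent K fun i : Fin k ↦ x i := by
    intro k hk
    induction k with
    | zero => exact linearIndependent_empty_type
    | succ k ih =>
      refine linearIndependent_finSucc'.2 ⟨ih (by lia), fun hmem ↦ ?_⟩
      obtain ⟨c, hc⟩ := (Submodule.mem_span_range_iff_exists_fun K).1 hmem
      refine h k (by lia) (fun i ↦ if hi : i < k then c ⟨i, hi⟩ else 0) ?_
      rw [Finset.sum_range]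
      simpa [Fin.init] using hc.symm
  simpa using (indep _ le_rfl).fintype_card_le_finrank

theorem exists_not_disjoint_chainSpace_bot [FiniteDimensional K V] {p q : V →ₗ[K] W} {x : ℕ → V}
    (hx : IsPencilChain p q (finrank K V + 1) x) (h₀ : p (x 0) = 0) (hx₀ : x 0 ≠ 0) :
    ∃ r, ¬ Disjoint (LinearMap.ker p) (chainSpace p q ⊥ r) := by
  obtain ⟨m, hm, c, hc⟩ := exists_eq_sum_range_of_finrank_lt (K := K) x
  let d : ℕ → K := fun k ↦ if k = 0 then 1 else -c (m - k)
  have hd₀ : seqConv d x 0 = x 0 := by simp [seqConv_zero, d]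
  have hdm : seqConv d x m = 0 := by
    rw [seqConv, ← Finset.Nat.sum_antidiagonal_swap,
      Finset.Nat.sum_antidiagonal_eq_sum_range_succ_mk, Finset.sum_range_succ]
    simp only [Prod.swap, Nat.sub_self]
    rw [Finset.sum_congr rfl fun k hk ↦ show d (m - k) • x k = -(c k • x k) by
      have := Finset.mem_range.1 hk
      simp [d, Nat.sub_ne_zero_of_lt this, Nat.sub_sub_self this.le]]
    simp [d, hc]
  refine ⟨m, fun h ↦ hx₀ (Submodule.disjoint_def.1 h (x 0) h₀ ?_)⟩
  exact mem_chainSpace_iff.2 ⟨seqConv d x, hd₀, (hx.mono (by lia)).convolve h₀ d, hdm⟩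

end Recombination

section SplitsOff

open Module

variable {ι K V : Type*} [Field K] [AddCommGroup V] [Module K V]

/-- The pair of Gram matrices of two bilinear forms with respect to a family of vectors. -/
def gramPair (a b : LinearMap.BilinForm K V) (e : ι → V) : MatrixPair ι ι K :=
  (.of fun i j ↦ a (e i) (e j), .of fun i j ↦ b (e i) (e j))

/-- Some basis of the space brings the pair of bilinear forms to the block-diagonal shape
`M ⊕ N`. -/
def SplitsOff (a b : LinearMap.BilinForm K V) (M : MatrixPair ι ι K) : Prop :=
  ∃ (k : ℕ) (e : Basis (ι ⊕ Fin k) K V) (N : MatrixPair (Fin k) (Fin k) K),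
    gramPair a b e = M.dsum N

theorem gramPair_equivalent {κ : Type*} [Fintype ι] [Fintype κ] [DecidableEq ι] [DecidableEq κ]
    (a b : LinearMap.BilinForm K V) (e : Basis ι K V) (f : Basis κ K V) :
    gramPair a b e ≈ₚ gramPair a b f := by
  have change_basis (c : LinearMap.BilinForm K V) :
      (e.toMatrix f)ᵀ * (Matrix.of fun i j ↦ c (e i) (e j)) * e.toMatrix f =
        Matrix.of fun i j ↦ c (f i) (f j) := by
    have he : (Matrix.of fun i j ↦ c (e i) (e j)) = LinearMap.BilinForm.toMatrix e c := by
      ext i j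
      exact (LinearMap.BilinForm.toMatrix_apply e c i j).symm
    have hf : (Matrix.of fun i j ↦ c (f i) (f j)) = LinearMap.BilinForm.toMatrix f c := by
      ext i j
      exact (LinearMap.BilinForm.toMatrix_apply f c i j).symm
    rw [he, hf, LinearMap.BilinForm.toMatrix_mul_basis_toMatrix]
  exact ⟨(e.toMatrix f)ᵀ, (f.toMatrix e)ᵀ, e.toMatrix f, f.toMatrix e,
    by simp [← Matrix.transpose_mul], by simp [← Matrix.transpose_mul], by simp, by simp,
    change_basis a, change_basis b⟩

theorem transpose_gramPair {a b : LinearMap.BilinForm K V} (ha : a.IsAlt) (hb : b.IsAlt)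
    (e : ι → V) : (gramPair a b e).transpose = -gramPair a b e := by
  ext i j
  · exact (ha.neg_eq (e i) (e j)).symm
  · exact (hb.neg_eq (e i) (e j)).symm

theorem SplitsOff.swap {a b : LinearMap.BilinForm K V} {M : MatrixPair ι ι K} :
    SplitsOff a b M → SplitsOff b a M.swap := by
  rintro ⟨k, e, N, h⟩
  exact ⟨k, e, N.swap, congrArg Prod.swap h⟩

theorem SplitsOff.of_sub_smul {a b : LinearMap.BilinForm K V} {M : MatrixPair ι ι K} {μ : K} :
    SplitsOff (a - μ • b) b M → SplitsOff a b (M.1 + μ • M.2, M.2) := by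
  rintro ⟨k, e, N, h⟩
  refine ⟨k, e, (N.1 + μ • N.2, N.2), ?_⟩
  have h₁ : gramPair a b e = ((gramPair (a - μ • b) b e).1 + μ • (gramPair (a - μ • b) b e).2,
      (gramPair (a - μ • b) b e).2) := by
    ext i j <;> simp [gramPair]
  rw [h₁, h]
  simp [MatrixPair.dsum, fromBlocks_add, fromBlocks_smul]

theorem exists_basis_of_dual_family [Finite ι] [DecidableEq ι] [FiniteDimensional K V] {e : ι → V}
    {ψ : ι → Dual K V} (hψ : ∀ i j, ψ i (e j) = if i = j then 1 else 0) :
    ∃ (k : ℕ) (f : Basis (ι ⊕ Fin k) K V),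
      (∀ i, f (.inl i) = e i) ∧ ∀ i j, ψ i (f (.inr j)) = 0 := by
  have := Fintype.ofFinite ι
  let s : (ι → K) →ₗ[K] V := Fintype.linearCombination K e
  let t : V →ₗ[K] ι → K := LinearMap.pi ψ
  have ht (v : V) (hv : t v = 0) (i : ι) : ψ i v = 0 := congrFun hv i
  have hts (c : ι → K) : t (s c) = c := by
    ext i
    simp [s, t, Fintype.linearCombination_apply, hψ]
  have hbij : Function.Bijective (s.coprod (LinearMap.ker t).subtype) := by
    constructor
    · rw [injective_iff_map_eq_zero]
      rintro ⟨c, w, hw⟩ h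
      have hc : c = 0 := by simpa [hts, LinearMap.mem_ker.1 hw] using congrArg t h
      simpa [hc] using h
    · intro v
      exact ⟨(t v, ⟨v - s (t v), by simp [hts]⟩), by simp⟩
  let g := (Pi.basisFun K ι).prod (finBasis K (LinearMap.ker t))
  refine ⟨_, g.map (.ofBijective _ hbij), fun i ↦ ?_, fun i j ↦ ht _ ?_ i⟩
  · simp [g, s]
  · simp [g]

theorem splitsOff_gramPair [Finite ι] [DecidableEq ι] [FiniteDimensional K V]
    {a b : LinearMap.BilinForm K V} (ha : a.IsAlt) (hb : b.IsAlt) {e : ι → V} {ψ : ι → Dual K V}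
    (hψ : ∀ i j, ψ i (e j) = if i = j then 1 else 0)
    (orth : ∀ w, (∀ i, ψ i w = 0) → ∀ i, a (e i) w = 0 ∧ b (e i) w = 0) :
    SplitsOff a b (gramPair a b e) := by
  obtain ⟨k, f, hfe, hψf⟩ := exists_basis_of_dual_family hψ
  have cross (i : ι) (j : Fin k) := orth (f (.inr j)) (hψf · j) i
  refine ⟨k, f, gramPair a b (f ∘ Sum.inr), ?_⟩
  ext (i | i) (j | j)
  all_goals simp [gramPair, MatrixPair.dsum, hfe, cross, ha.eq_iff (y := e _), hb.eq_iff (y := e _)]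

end SplitsOff

section Isotropy

variable {K V : Type*} [CommRing K] [AddCommGroup V] [Module K V] {p q : LinearMap.BilinForm K V}
  {n : ℕ} {x : ℕ → V}

theorem IsPencilChain.apply_right_eq_zero (hp : p.IsAlt) (hq : q.IsAlt)
    (hx : IsPencilChain p q n x) {i j : ℕ} (hi : i < n) (hj : j < n) : q (x i) (x j) = 0 := by
  have ordered (d : ℕ) : ∀ i, i + d < n → q (x i) (x (i + d)) = 0 := by
    induction d using Nat.twoStepInduction with
    | zero => exact fun i _ ↦ hq.self_eq_zero _
    | one => exact fun i hi ↦ by rw [hx i hi, hp.self_eq_zero]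
    | more d ih _ =>
      intro i hi
      calc
        q (x i) (x (i + d + 2)) = p (x (i + 1)) (x (i + d + 2)) := by rw [hx i (by lia)]
        _ = -p (x (i + d + 2)) (x (i + 1)) := (hp.neg_eq _ _).symm
        _ = -q (x (i + d + 1)) (x (i + 1)) := by rw [hx (i + d + 1) hi]
        _ = q (x (i + 1)) (x (i + 1 + d)) := by rw [hq.neg_eq, Nat.add_right_comm]
        _ = 0 := ih (i + 1) (by lia)
  obtain ⟨d, rfl⟩ | ⟨d, rfl⟩ := (le_total i j).imp Nat.exists_eq_add_of_le Nat.exists_eq_add_of_le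
  · exact ordered d i hj
  · exact hq.isRefl _ _ (ordered d j hi)

theorem IsPencilChain.apply_left_eq_zero (hp : p.IsAlt) (hq : q.IsAlt)
    (hx : IsPencilChain p q n x) {i j : ℕ} (hi : i < n) (hj : j < n) : p (x i) (x j) = 0 := by
  rcases i with _ | i
  · rcases j with _ | j
    · exact hp.self_eq_zero _
    · exact hp.isRefl _ _ (by rw [← hx j hj]; exact hx.apply_right_eq_zero hp hq (by lia) hi)
  · rw [← hx i hi]
    exact hx.apply_right_eq_zero hp hq (by lia) hj

/-- Vectors `y₀, …, y_{r-1}` and functionals `φ₀, …, φ_r` with `q yⱼ = φⱼ` and `p yⱼ = φⱼ₊₁`. They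
form a chain for the reversed pencil `q - λ p`, to be paired with a chain for `p - λ q`. -/
def IsDualChain (p q : LinearMap.BilinForm K V) (r : ℕ) (φ : ℕ → Module.Dual K V) (y : ℕ → V) :
    Prop :=
  ∀ j < r, q (y j) = φ j ∧ p (y j) = φ (j + 1)

variable {r : ℕ} {φ : ℕ → Module.Dual K V} {y : ℕ → V}

theorem IsDualChain.isPencilChain (hy : IsDualChain p q r φ y) : IsPencilChain q p r y :=
  fun i hi ↦ (hy i (by lia)).2.trans (hy (i + 1) hi).1.symm

theorem IsDualChain.apply_eq_zero (hp : p.IsAlt) (hq : q.IsAlt) (hy : IsDualChain p q r φ y)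
    {j k : ℕ} (hj : j ≤ r) (hk : k < r) : φ j (y k) = 0 := by
  rcases j with _ | j
  · rw [← (hy 0 (by lia)).1]
    exact hy.isPencilChain.apply_left_eq_zero hq hp (by lia) hk
  · rw [← (hy j hj).2]
    exact hy.isPencilChain.apply_right_eq_zero hq hp hj hk

theorem IsDualChain.apply_succ_succ (hp : p.IsAlt) (hq : q.IsAlt) (hy : IsDualChain p q r φ y)
    (hx : IsPencilChain p q n x) {i j : ℕ} (hi : i < r) (hj : j + 1 < n) :
    φ (i + 1) (x (j + 1)) = φ i (x j) := by
  rw [← (hy i hi).2, ← (hy i hi).1, ← hp.neg_eq, ← hx j hj, hq.neg_eq]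

theorem IsDualChain.apply_add_add (hp : p.IsAlt) (hq : q.IsAlt) (hy : IsDualChain p q r φ y)
    (hx : IsPencilChain p q n x) {i j d : ℕ} (hi : i + d ≤ r) (hj : j + d < n) :
    φ (i + d) (x (j + d)) = φ i (x j) := by
  induction d with
  | zero => rfl
  | succ d ih =>
    exact (hy.apply_succ_succ hp hq hx hi hj).trans (ih (by lia) (by lia))

theorem IsDualChain.apply_eq_ite (hp : p.IsAlt) (hq : q.IsAlt) (hy : IsDualChain p q r φ y)
    (hx : IsPencilChain p q n x) (h₀ : p (x 0) = 0)
    (hφ : ∀ j < n, φ 0 (x j) = if j = 0 then 1 else 0) {i j : ℕ} (hi : i ≤ r) (hj : j < n) :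
    φ i (x j) = if j = i then 1 else 0 := by
  rcases le_or_gt i j with hij | hij
  · obtain ⟨d, rfl⟩ := Nat.exists_eq_add_of_le' hij
    simpa using (hy.apply_add_add hp hq hx (i := 0) (j := d) (d := i) (by lia) hj).trans
      (hφ d (by lia))
  · obtain ⟨d, rfl⟩ := Nat.exists_eq_add_of_lt hij
    rw [if_neg hij.ne]
    calc
      φ (j + d + 1) (x j) = φ (d + 1 + j) (x (0 + j)) := by congr 2 <;> lia
      _ = φ (d + 1) (x 0) := hy.apply_add_add hp hq hx (by lia) (by lia)
      _ = p (y d) (x 0) := by rw [(hy d (by lia)).2]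
      _ = 0 := hp.isRefl _ _ (by rw [h₀, LinearMap.zero_apply])

end Isotropy

section Duality

open Module

variable {K V : Type*} [Field K] [AddCommGroup V] [Module K V] [FiniteDimensional K V]
  {p q : LinearMap.BilinForm K V}

theorem dualAnnihilator_comap_map (hp : p.IsRefl) (hq : q.IsRefl) (S : Submodule K V) :
    ((S.map p).comap q).dualAnnihilator = (S.dualAnnihilator.comap p).map q := by
  have hS : S.dualAnnihilator.comap p = (S.map p).dualCoannihilator := by
    ext w
    simp [Submodule.mem_dualAnnihilator, Submodule.mem_dualCoannihilator, hp.eq_iff (x := w)]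
  have hcoann : ((S.dualAnnihilator.comap p).map q).dualCoannihilator = (S.map p).comap q := by
    ext v
    rw [Submodule.mem_comap, ← Subspace.dualCoannihilator_dualAnnihilator_eq (W := S.map p), hS]
    simp [Submodule.mem_dualAnnihilator, Submodule.mem_dualCoannihilator, hq.eq_iff (x := v)]
  rw [← hcoann, Subspace.dualCoannihilator_dualAnnihilator_eq]

theorem exists_isDualChain_of_mem_dualAnnihilator (hp : p.IsRefl) (hq : q.IsRefl)
    {S : Submodule K V} {m : ℕ} {φ₀ : Dual K V}
    (hφ₀ : φ₀ ∈ (chainSpace p q S m).dualAnnihilator) :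
    ∃ φ y, φ 0 = φ₀ ∧ IsDualChain p q m φ y ∧ φ m ∈ S.dualAnnihilator := by
  induction m generalizing φ₀ with
  | zero => exact ⟨fun _ ↦ φ₀, 0, rfl, nofun, hφ₀⟩
  | succ m ih =>
    rw [chainSpace, dualAnnihilator_comap_map hp hq] at hφ₀
    obtain ⟨z, hz, rfl⟩ := hφ₀
    obtain ⟨φ, y, hφ, hy, hS⟩ := ih hz
    refine ⟨fun i ↦ i.casesOn (q z) φ, fun i ↦ i.casesOn z y, rfl, ?_, hS⟩
    rintro (_ | j) hj
    · exact ⟨rfl, hφ.symm⟩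
    · exact hy j (by lia)

theorem exists_isDualChain_of_notMem (hp : p.IsRefl) (hq : q.IsRefl) {S : Submodule K V} {m : ℕ}
    {v : V} (hv : v ∉ chainSpace p q S m) :
    ∃ φ y, φ 0 v = 1 ∧ IsDualChain p q m φ y ∧ φ m ∈ S.dualAnnihilator := by
  rw [← Subspace.forall_mem_dualAnnihilator_apply_eq_zero_iff] at hv
  push Not at hv
  obtain ⟨f, hf, hfv⟩ := hv
  obtain ⟨φ, y, hφ, h⟩ := exists_isDualChain_of_mem_dualAnnihilator hp hq
    (Submodule.smul_mem _ (f v)⁻¹ hf)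
  exact ⟨φ, y, by simp [hφ, hfv], h⟩

end Duality

section Splitting

open Module

/-- The `r × c` matrices with ones on the superdiagonal and on the diagonal. For `c = r` this is
the pencil of a nilpotent Jordan block, for `c = r + 1` the pencil `L_r`. -/
def shiftPair (K : Type*) [Zero K] [One K] (r c : ℕ) : MatrixPair (Fin r) (Fin c) K :=
  (.of fun i j ↦ if (j : ℕ) = i + 1 then 1 else 0, .of fun i j ↦ if (j : ℕ) = i then 1 else 0)

variable {K V : Type*} [Field K] [AddCommGroup V] [Module K V]
  {p q : LinearMap.BilinForm K V} {r c : ℕ} {x y : ℕ → V} {φ : ℕ → Dual K V}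

theorem gramPair_eq_skew_shiftPair (hp : p.IsAlt) (hq : q.IsAlt) (hx : IsPencilChain p q c x)
    (hy : IsDualChain p q r φ y)
    (hφ : ∀ i ≤ r, ∀ j < c, φ i (x j) = if j = i then 1 else 0) :
    gramPair p q (Sum.elim (fun i : Fin r ↦ y i) fun j : Fin c ↦ x j) = skew (shiftPair K r c) := by
  have hyy (i k : Fin r) : p (y i) (y k) = 0 ∧ q (y i) (y k) = 0 := by
    simp only [hy i i.2, hy.apply_eq_zero hp hq _ k.2, i.2, i.2.le, Nat.succ_le_of_lt, and_self]
  have hyx (i : Fin r) (j : Fin c) :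
      p (y i) (x j) = (shiftPair K r c).1 i j ∧ q (y i) (x j) = (shiftPair K r c).2 i j := by
    rw [(hy i i.2).1, (hy i i.2).2, hφ _ i.2 _ j.2, hφ _ i.2.le _ j.2]
    exact ⟨rfl, rfl⟩
  have hxx (j k : Fin c) : p (x j) (x k) = 0 ∧ q (x j) (x k) = 0 :=
    ⟨hx.apply_left_eq_zero hp hq j.2 k.2, hx.apply_right_eq_zero hp hq j.2 k.2⟩
  ext (i | i) (j | j)
  · exact (hyy i j).1
  · exact (hyx i j).1
  · exact (hp.neg_eq _ _).symm.trans (congrArg Neg.neg (hyx j i).1)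
  · exact (hxx i j).1
  · exact (hyy i j).2
  · exact (hyx i j).2
  · exact (hq.neg_eq _ _).symm.trans (congrArg Neg.neg (hyx j i).2)
  · exact (hxx i j).2

theorem splitsOff_skew_shiftPair [FiniteDimensional K V] (hp : p.IsAlt) (hq : q.IsAlt)
    (hx : IsPencilChain p q c x) (h₀ : p (x 0) = 0) (hy : IsDualChain p q r φ y)
    (hφ : ∀ j < c, φ 0 (x j) = if j = 0 then 1 else 0) (hrc : r ≤ c) (hcr : c ≤ r + 1)
    (hφr : c ≤ r → φ r = 0) (hxr : r < c → q (x r) = 0) :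
    SplitsOff p q (skew (shiftPair K r c)) := by
  have pairing {i j : ℕ} (hi : i ≤ r) (hj : j < c) := hy.apply_eq_ite hp hq hx h₀ hφ hi hj
  rw [← gramPair_eq_skew_shiftPair hp hq hx hy fun i hi j hj ↦ pairing hi hj]
  refine splitsOff_gramPair hp hq
    (ψ := Sum.elim (fun i : Fin r ↦ -q (x i)) fun j : Fin c ↦ φ j) ?_ ?_
  · rintro (i | i) (j | j)
    · have := pairing j.2.le (i.2.trans_le hrc)
      rw [← (hy j j.2).1] at this
      simpa [hq.neg_eq, Fin.ext_iff] using this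
    · simpa using hx.apply_right_eq_zero hp hq (i.2.trans_le hrc) j.2
    · simpa using hy.apply_eq_zero hp hq (by lia) j.2
    · simpa [Fin.ext_iff, eq_comm] using pairing (i := i) (by lia) j.2
  · intro w hw
    have hφw (j : ℕ) (hj : j ≤ r) : φ j w = 0 := by
      rcases hj.lt_or_eq with hj | rfl
      · exact hw (.inr ⟨j, by lia⟩)
      · rcases le_or_gt c j with h | h
        · rw [hφr h, LinearMap.zero_apply]
        · exact hw (.inr ⟨j, h⟩)
    have hxw (j : ℕ) (hj : j < c) : q (x j) w = 0 := by
      rcases lt_or_ge j r with h | h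
      · exact neg_eq_zero.1 (hw (.inl ⟨j, h⟩))
      · obtain rfl : j = r := by lia
        rw [hxr hj, LinearMap.zero_apply]
    rintro (i | ⟨_ | j, hj⟩)
    · exact ⟨by simpa [hy i i.2] using hφw _ i.2, by simpa [hy i i.2] using hφw _ i.2.le⟩
    · exact ⟨by simp [h₀], hxw 0 hj⟩
    · exact ⟨by simpa [← hx j hj] using hxw j (by lia), hxw _ hj⟩

theorem exists_splitsOff_of_not_disjoint [FiniteDimensional K V] (hp : p.IsAlt) (hq : q.IsAlt)
    (h : ∃ r, ¬ Disjoint (LinearMap.ker p) (chainSpace p q ⊥ r)) :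
    ∃ r, SplitsOff p q (skew (shiftPair K r (r + 1))) := by
  obtain ⟨r, hmin, hr⟩ := Nat.exists_not_and_succ_of_not_zero_of_exists
    (not_not.2 disjoint_bot_right) h
  rw [not_not] at hmin
  simp only [Submodule.disjoint_def, not_forall] at hr
  obtain ⟨v, hpv, hv, hv₀⟩ := hr
  obtain ⟨x, rfl, hx, hxr⟩ := mem_chainSpace_iff.1 hv
  obtain ⟨φ, y, hφ, hy, -⟩ := exists_isDualChain_of_notMem hp.isRefl hq.isRefl
    fun hv' ↦ hv₀ (Submodule.disjoint_def.1 hmin _ hpv hv')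
  have hqx : q (x r) = 0 := by rw [hx r (by lia), (Submodule.mem_bot K).1 hxr, map_zero]
  replace hx := hx.mono (Nat.le_succ (r + 1))
  refine ⟨r, splitsOff_skew_shiftPair hp hq hx hpv hy ?_ (by lia) le_rfl (by lia) fun _ ↦ hqx⟩
  rintro (_ | j) hj
  · exact hφ
  · obtain ⟨d, rfl⟩ := Nat.exists_eq_add_of_le' (Nat.le_of_lt_succ hj)
    rw [if_neg j.succ_ne_zero]
    calc
      φ 0 (x (j + 1)) = φ (0 + d) (x (j + 1 + d)) :=
        (hy.apply_add_add hp hq hx (by lia) (by lia)).symm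
      _ = q (y d) (x (d + (j + 1))) := by rw [(hy d (by lia)).1, zero_add, add_comm d]
      _ = 0 := hq.isRefl _ _ (by rw [hqx, LinearMap.zero_apply])

theorem IsPencilChain.exists_apply_eq_ite (hx : IsPencilChain p q c x) (h₀ : p (x 0) = 0)
    {f : Dual K V} (hf : f (x 0) ≠ 0) :
    ∃ x', IsPencilChain p q c x' ∧ p (x' 0) = 0 ∧ ∀ j, f (x' j) = if j = 0 then 1 else 0 := by
  let a : PowerSeries K := .mk fun j ↦ f (x j)
  have ha : a⁻¹ * a = 1 := PowerSeries.inv_mul_cancel a (by simpa [a] using hf)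
  refine ⟨seqConv (fun j ↦ a⁻¹.coeff j) x, hx.convolve h₀ _, by simp [seqConv_zero, h₀],
    fun j ↦ ?_⟩
  rw [map_seqConv, ← PowerSeries.coeff_one, ← ha, PowerSeries.coeff_mul]
  simp [seqConv, a]

theorem exists_splitsOff_of_disjoint [FiniteDimensional K V] (hp : p.IsAlt) (hq : q.IsAlt)
    (h : ∀ r, Disjoint (LinearMap.ker p) (chainSpace p q ⊥ r)) (hker : LinearMap.ker p ≠ ⊥) :
    ∃ s, 1 ≤ s ∧ SplitsOff p q (skew (shiftPair K s s)) := by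
  have hex : ∃ s, Disjoint (LinearMap.ker p) (chainSpace p q ⊤ s) := by
    refine ⟨finrank K V, Submodule.disjoint_def.2 fun v hpv hv ↦ ?_⟩
    obtain ⟨x, rfl, hx, -⟩ := mem_chainSpace_iff.1 hv
    by_contra hx₀
    obtain ⟨r, hr⟩ := exists_not_disjoint_chainSpace_bot hx hpv hx₀
    exact hr (h r)
  obtain ⟨t, hmin, ht⟩ := Nat.exists_not_and_succ_of_not_zero_of_exists
    (fun h₀ ↦ hker (disjoint_top.1 h₀)) hex
  simp only [Submodule.disjoint_def, not_forall] at hmin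
  obtain ⟨v, hpv, hv, hv₀⟩ := hmin
  obtain ⟨x, rfl, hx, -⟩ := mem_chainSpace_iff.1 hv
  obtain ⟨φ, y, hφ, hy, hφt⟩ := exists_isDualChain_of_notMem hp.isRefl hq.isRefl
    fun hv' ↦ hv₀ (Submodule.disjoint_def.1 ht _ hpv hv')
  obtain ⟨x', hx', h₀, hφ'⟩ := hx.exists_apply_eq_ite hpv (hφ ▸ one_ne_zero)
  exact ⟨t + 1, by lia, splitsOff_skew_shiftPair hp hq hx' h₀ hy (fun j _ ↦ hφ' j) le_rfl (by lia)
    (fun _ ↦ by simpa using hφt) (by lia)⟩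

end Splitting

section Blocks

open Module

theorem Eblk_eq_shiftPair (k : ℕ) (μ : ℂ) :
    Eblk k μ = ((shiftPair ℂ k k).1 + μ • (shiftPair ℂ k k).2, (shiftPair ℂ k k).2) := by
  ext i j
  · by_cases h : (j : ℕ) = i <;> simp [Eblk, Jmat, shiftPair, h]
  · simp [Eblk, shiftPair, Matrix.one_apply, Fin.ext_iff, eq_comm]

theorem EInfblk_eq_shiftPair (k : ℕ) : EInfblk k = (shiftPair ℂ k k).swap := by
  have h := Eblk_eq_shiftPair k 0
  rw [zero_smul, add_zero] at h
  exact congrArg Prod.swap h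

theorem exists_ker_sub_smul_ne_bot {K V : Type*} [Field K] [IsAlgClosed K] [AddCommGroup V]
    [Module K V] [FiniteDimensional K V] [Nontrivial V] (a b : LinearMap.BilinForm K V)
    (hb : LinearMap.ker b = ⊥) : ∃ μ : K, LinearMap.ker (a - μ • b) ≠ ⊥ := by
  let e : V ≃ₗ[K] Dual K V :=
    .ofInjectiveOfFinrankEq b (LinearMap.ker_eq_bot.1 hb) Subspace.dual_finrank_eq.symm
  obtain ⟨μ, hμ⟩ := Module.End.exists_eigenvalue (e.symm.toLinearMap ∘ₗ a)
  obtain ⟨v, hv, hv₀⟩ := hμ.exists_hasEigenvector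
  refine ⟨μ, fun h ↦ hv₀ ((Submodule.eq_bot_iff _).1 h v ?_)⟩
  have hav : a v = e (μ • v) := (e.symm_apply_eq).1 (Module.End.mem_eigenspace_iff.1 hv)
  have heb : e (μ • v) = b (μ • v) := rfl
  rw [LinearMap.mem_ker, LinearMap.sub_apply, hav, heb, map_smul, LinearMap.smul_apply, sub_self]

variable {V : Type*} [AddCommGroup V] [Module ℂ V] [FiniteDimensional ℂ V]
  {a b : LinearMap.BilinForm ℂ V}

theorem exists_splitsOff_Eblk (ha : a.IsAlt) (hb : b.IsAlt) (μ : ℂ)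
    (h : ∀ r, Disjoint (LinearMap.ker (a - μ • b)) (chainSpace (a - μ • b) b ⊥ r))
    (hker : LinearMap.ker (a - μ • b) ≠ ⊥) : ∃ k, 1 ≤ k ∧ SplitsOff a b (skew (Eblk k μ)) := by
  obtain ⟨k, hk, hsplit⟩ := exists_splitsOff_of_disjoint (ha.sub (hb.smul μ)) hb h hker
  refine ⟨k, hk, ?_⟩
  convert hsplit.of_sub_smul using 1
  rw [Eblk_eq_shiftPair]
  simp [skew, fromBlocks_add, fromBlocks_smul, Matrix.transpose_add, add_comm]

theorem exists_splitsOff_toPencil [Nontrivial V] (ha : a.IsAlt) (hb : b.IsAlt) :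
    ∃ B : KBlock, B.valid ∧ 0 < B.cols ∧ SplitsOff a b (skew B.toPencil) := by
  by_cases hkb : LinearMap.ker b = ⊥
  · obtain ⟨μ, hμ⟩ := exists_ker_sub_smul_ne_bot a b hkb
    obtain ⟨k, hk, h⟩ := exists_splitsOff_Eblk ha hb μ
      (fun r ↦ by rw [chainSpace_bot_of_ker_eq_bot hkb]; exact disjoint_bot_right) hμ
    exact ⟨.E k μ, hk, hk, h⟩
  by_cases hka : LinearMap.ker a = ⊥
  · obtain ⟨k, hk, h⟩ := exists_splitsOff_of_disjoint hb ha
      (fun r ↦ by rw [chainSpace_bot_of_ker_eq_bot hka]; exact disjoint_bot_right) hkb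
    exact ⟨.Einf k, hk, hk, show SplitsOff a b (skew (EInfblk k)) by
      rw [EInfblk_eq_shiftPair]; exact h.swap⟩
  by_cases h : ∃ r, ¬ Disjoint (LinearMap.ker a) (chainSpace a b ⊥ r)
  · obtain ⟨k, h⟩ := exists_splitsOff_of_not_disjoint ha hb h
    exact ⟨.L k, trivial, k.succ_pos, h⟩
  · push Not at h
    obtain ⟨k, hk, h⟩ := exists_splitsOff_Eblk ha hb 0 (by simpa using h) (by simpa using hka)
    exact ⟨.E k 0, hk, hk, h⟩

end Blocks

theorem isAlt_toBilin'_of_transpose_eq_neg {n K : Type*} [CommRing K] [NoZeroDivisors K]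
    [CharZero K] [Fintype n] [DecidableEq n] {A : Matrix n n K} (hA : Aᵀ = -A) :
    A.toBilin'.IsAlt := by
  intro v
  have h : A.toBilin' v v = -A.toBilin' v v := by
    simp only [Matrix.toBilin'_apply']
    nth_rw 1 [Matrix.dotProduct_mulVec, ← Matrix.mulVec_transpose, hA, Matrix.neg_mulVec,
      neg_dotProduct, dotProduct_comm]
  exact self_eq_neg.1 h

namespace Pencil

theorem IsSkew.exists_equivalent_skew_dsum {n : ℕ} [NeZero n] {Q : Pencil n n} (hQ : Q.IsSkew) :
    ∃ (B : KBlock) (k : ℕ) (N : Pencil k k), B.valid ∧ k < n ∧ N.IsSkew ∧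
      Q ≈ₚ (skew B.toPencil).dsum N := by
  have ha := isAlt_toBilin'_of_transpose_eq_neg hQ.1
  have hb := isAlt_toBilin'_of_transpose_eq_neg hQ.2
  obtain ⟨B, hB, hBpos, k, e, N, h⟩ := exists_splitsOff_toPencil ha hb
  have hQ' : gramPair Q.1.toBilin' Q.2.toBilin' (Pi.basisFun ℂ (Fin n)) = Q := by
    ext <;> simp [gramPair]
  have hequiv : Q ≈ₚ (skew B.toPencil).dsum N := by
    rw [← h]
    nth_rw 1 [← hQ']
    exact gramPair_equivalent _ _ _ _
  have hcard : n = B.rows + B.cols + k := by simpa using hequiv.card_cols_eq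
  have hN := transpose_gramPair ha hb e
  rw [h, transpose_dsum] at hN
  exact ⟨B, k, N, hB, by lia,
    ⟨congrArg (fun M ↦ M.1.toBlocks₂₂) hN, congrArg (fun M ↦ M.2.toBlocks₂₂) hN⟩, hequiv⟩

theorem IsSkew.exists_equivalent_skew_pencilOfList {n : ℕ} {Q : Pencil n n} (hQ : Q.IsSkew) :
    ∃ l : List KBlock, (∀ b ∈ l, b.valid) ∧ Q ≈ₚ skew (pencilOfList l) := by
  induction n using Nat.strong_induction_on with
  | h n ih =>
  rcases eq_zero_or_neZero n with rfl | _
  · exact ⟨[], nofun, equivalent_of_isEmpty _ _⟩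
  · obtain ⟨B, k, N, hB, hk, hN, hQN⟩ := hQ.exists_equivalent_skew_dsum
    obtain ⟨l, hl, hNl⟩ := ih k hk hN
    refine ⟨B :: l, List.forall_mem_cons.2 ⟨hB, hl⟩, ?_⟩
    calc
      Q ≈ₚ (skew B.toPencil).dsum N := hQN
      _ ≈ₚ (skew B.toPencil).dsum (skew (pencilOfList l)) := (Equivalent.refl _).dsum hNl
      _ ≈ₚ skew (MatrixPair.dsum B.toPencil (pencilOfList l)) := dsum_skew _ _
      _ ≈ₚ skew (pencilOfList (B :: l)) := (dsum_pencilOfList_equivalent B l).skew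

end Pencil

/-- **Lemma 2.6**: a complex matrix pencil is strictly equivalent to some
skew-symmetric matrix pencil if and only if in its Kronecker canonical form
(1) for every `k` and `μ ∈ ℂ` the number of blocks `E_k(μ)` is even,
(2) for every `k` the number of blocks `E_k(∞)` is even, and
(3) for every `k` the number of blocks `L_k` equals the number of blocks
`L_kᵀ`. -/
theorem skew_symmetrizable_iff {n : ℕ} (P : Pencil n n) :
    (∃ Q : Pencil n n, Pencil.IsSkew Q ∧ Pencil.StrictEquiv P Q) ↔
      ∃ s : Multiset KBlock, RepresentsE P s ∧
        (∀ (k : ℕ) (μ : ℂ), Even (s.count (KBlock.E k μ))) ∧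
        (∀ k : ℕ, Even (s.count (KBlock.Einf k))) ∧
        (∀ k : ℕ, s.count (KBlock.L k) = s.count (KBlock.LT k)) := by
  simp only [← exists_eq_add_map_transpose_iff]
  constructor
  · rintro ⟨Q, hQ, hPQ⟩
    obtain ⟨l, hl, hQl⟩ := hQ.exists_equivalent_skew_pencilOfList
    refine ⟨↑(l ++ l.map KBlock.transpose), representsE_coe_iff.2 ⟨?_, ?_⟩, l, rfl⟩
    · simpa [KBlock.valid_transpose, or_imp, forall_and] using hl
    · calc
        pencilOfList (l ++ l.map KBlock.transpose)
          ≈ₚ skew (pencilOfList l) := pencilOfList_append_map_transpose_equivalent l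
        _ ≈ₚ Q := hQl.symm
        _ ≈ₚ P := (Pencil.strictEquiv_iff.1 hPQ).symm
  · rintro ⟨_, hP, t, rfl⟩
    induction t using Quotient.inductionOn with
    | h l =>
    obtain ⟨-, hlP⟩ := representsE_coe_iff (l := l ++ l.map KBlock.transpose).1 hP
    exact Pencil.exists_isSkew_strictEquiv
      (hlP.symm.trans (pencilOfList_append_map_transpose_equivalent l))
end
end

section
/- Let P be a skew-symmetric complex matrix pencil. For every eigenvalue μ ∈ ℂ ∪ {∞} and every i ≥ 1, the entry j_i^μ(P) of the Weyr characteristic J_μ(P) is even; that is, the number of blocks E_k(μ) with k ≥ i in the Kronecker canonical form of P is even. -/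
/-!
Basic framework: a complex `m × n` matrix pencil `A - λ B` is formalized as the
pair `(A, B)` of matrices.  We define strict equivalence, congruence,
skew-symmetry, orbits, direct sums, and the cover relations for the orbit
closure hierarchies (in the Euclidean topology).
-/

open Matrix

noncomputable section

/-! Weyr characteristics of a Kronecker canonical form. -/

open scoped Classical

/-- `r_i`: the number of `L`-blocks with index `≥ i`. -/
def rW (s : Multiset KBlock) (i : ℕ) : ℕ :=
  Multiset.card (s.filter fun b => ∃ a, b = KBlock.L a ∧ i ≤ a)

/-- `l_i`: the number of `Lᵀ`-blocks with index `≥ i`. -/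
def lW (s : Multiset KBlock) (i : ℕ) : ℕ :=
  Multiset.card (s.filter fun b => ∃ a, b = KBlock.LT a ∧ i ≤ a)

/-- `j_i^μ`: the number of `E`-blocks with eigenvalue `μ ∈ ℂ ∪ {∞}` and index
`≥ i`. -/
def jW (s : Multiset KBlock) (μ : Option ℂ) (i : ℕ) : ℕ :=
  Multiset.card (s.filter fun b => ∃ a, b = Eb μ a ∧ i ≤ a)

/-!
For a pencil `P = A - λ B`, let `ρ_i` be the rank of the generalized Sylvester operator
`X ↦ A X Dᵀ - B X Cᵀ`, where `C - λ D = E_i(μ)`. It depends only on the strict equivalence class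
of `P` and is additive over direct sums. On `L_k`, `L_kᵀ` and `E_k(ν)` with `ν ≠ μ` it equals
`i k`, whereas on `E_k(μ)` the kernel consists of the Hankel matrices vanishing from the
antidiagonal `min i k` on, so that it equals `i k - min i k`. Hence
`ρ_{i+1} + j_{i+1}^μ(P) = ρ_i + σ`, where `σ` is the sum of the indices of all blocks.

Reversing the order of the rows makes both matrices of `E_i(μ)` symmetric. If `P` is
skew-symmetric, the matrix of the operator then becomes skew-symmetric, so every `ρ_i` is even.
All `j_i^μ(P)` with `i ≥ 1` therefore have the parity of `σ`, and they vanish for large `i`.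
-/

open scoped Kronecker
open Module

section BilinForm

variable {K V : Type*} [Field K] [AddCommGroup V] [Module K V]

theorem nondegenerate_domRestrict₁₂_of_isCompl_ker {B : LinearMap.BilinForm K V}
    (hB : B.IsRefl) {W : Submodule K V} (hW : IsCompl W B.ker) :
    (B.domRestrict₁₂ W W).Nondegenerate := by
  have hrefl : (B.domRestrict₁₂ W W).IsRefl := fun x y => hB x y
  refine hrefl.nondegenerate_iff_separatingLeft.mpr fun x hx => ?_
  have hxker : (x : V) ∈ B.ker := by
    ext v
    obtain ⟨w, hw, u, hu, rfl⟩ := Submodule.mem_sup.mp (hW.sup_eq_top ▸ Submodule.mem_top (x := v))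
    have hxu : B x u = 0 := hB u x (LinearMap.congr_fun (LinearMap.mem_ker.mp hu) x)
    have hxw : B x w = 0 := hx ⟨w, hw⟩
    simp [hxu, hxw]
  exact Subtype.ext (Submodule.disjoint_def.mp hW.disjoint x x.2 hxker)

variable [NeZero (2 : K)] [FiniteDimensional K V]

theorem even_finrank_of_nondegenerate_of_apply_eq_neg {B : LinearMap.BilinForm K V}
    (hB : B.Nondegenerate) (hneg : ∀ x y, B x y = -B y x) : Even (finrank K V) := by
  let M := LinearMap.BilinForm.toMatrix (finBasis K V) B
  have hM : M.det ≠ 0 := (LinearMap.BilinForm.nondegenerate_iff_det_ne_zero _).mp hB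
  have hMT : Mᵀ = -M := by
    ext i j
    simpa only [M, transpose_apply, Matrix.neg_apply, LinearMap.BilinForm.toMatrix_apply]
      using hneg _ _
  by_contra hodd
  have hdet : M.det = -M.det := by
    conv_lhs => rw [← det_transpose, hMT, det_neg, Fintype.card_fin,
      (Nat.not_even_iff_odd.mp hodd).neg_one_pow, neg_one_mul]
  have htwo : (2 : K) * M.det = 0 := by rw [two_mul, ← eq_neg_iff_add_eq_zero, ← hdet]
  exact (mul_ne_zero two_ne_zero hM) htwo

theorem even_finrank_range_of_apply_eq_neg {B : LinearMap.BilinForm K V}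
    (hneg : ∀ x y, B x y = -B y x) : Even (finrank K B.range) := by
  obtain ⟨W, hW⟩ := B.ker.exists_isCompl
  have hrefl : B.IsRefl := fun x y h => by rw [hneg, h, neg_zero]
  have hfinrank : finrank K B.range = finrank K W := by
    have hsum := Submodule.finrank_add_eq_of_isCompl hW
    have hrank := B.finrank_range_add_finrank_ker
    omega
  rw [hfinrank]
  exact even_finrank_of_nondegenerate_of_apply_eq_neg
    (nondegenerate_domRestrict₁₂_of_isCompl_ker hrefl hW.symm) fun x y => hneg x y

end BilinForm

section Rank

variable {K l m n o : Type*} [Field K]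

theorem even_rank_of_transpose_eq_neg [NeZero (2 : K)] [Fintype n] {A : Matrix n n K}
    (hA : Aᵀ = -A) : Even A.rank := by
  classical
  let B : LinearMap.BilinForm K (n → K) := (dotProductEquiv K n).toLinearMap ∘ₗ A.mulVecLin
  have hneg : ∀ x y, B x y = -B y x := fun x y => calc
    A *ᵥ x ⬝ᵥ y = Aᵀ *ᵥ y ⬝ᵥ x := by
      rw [dotProduct_comm, dotProduct_mulVec, mulVec_transpose]
    _ = -(A *ᵥ y ⬝ᵥ x) := by rw [hA, neg_mulVec, neg_dotProduct]
  have hrank : finrank K B.range = A.rank := by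
    rw [LinearMap.range_comp, LinearEquiv.finrank_map_eq, Matrix.rank]
  exact hrank ▸ even_finrank_range_of_apply_eq_neg hneg

theorem rank_neg_eq_rank {R : Type*} [CommRing R] [Fintype n] (A : Matrix m n R) :
    (-A).rank = A.rank := by
  have h : (-A).mulVecLin = -A.mulVecLin := LinearMap.ext fun v => neg_mulVec v A
  rw [Matrix.rank, h, LinearMap.range_neg, Matrix.rank]

theorem finrank_submodule_prod {V W : Type*} [AddCommGroup V] [Module K V] [AddCommGroup W]
    [Module K W] [FiniteDimensional K V] [FiniteDimensional K W] (p : Submodule K V)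
    (q : Submodule K W) : finrank K (p.prod q) = finrank K p + finrank K q := by
  have hinj : Function.Injective (p.subtype.prodMap q.subtype) :=
    p.injective_subtype.prodMap q.injective_subtype
  have hfinrank := LinearMap.finrank_range_of_inj hinj
  rwa [LinearMap.range_prodMap, p.range_subtype, q.range_subtype, finrank_prod] at hfinrank

theorem rank_fromBlocks_zero_zero [Finite l] [Fintype m] [Finite n] [Fintype o] (A : Matrix l m K)
    (D : Matrix n o K) : (fromBlocks A 0 0 D).rank = A.rank + D.rank := by
  let e := LinearEquiv.sumArrowLequivProdArrow m o K K
  let f := LinearEquiv.sumArrowLequivProdArrow l n K K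
  have h : (fromBlocks A 0 0 D).mulVecLin =
      f.symm.toLinearMap ∘ₗ A.mulVecLin.prodMap D.mulVecLin ∘ₗ e.toLinearMap := by
    refine LinearMap.ext fun v => funext ?_
    rintro (i | i) <;>
      simp [e, f, fromBlocks_mulVec, LinearEquiv.sumArrowLequivProdArrow,
        Equiv.sumArrowEquivProdArrow, Function.comp_def]
  rw [Matrix.rank, h, LinearMap.range_comp, LinearEquiv.finrank_map_eq,
    LinearMap.range_comp_of_range_eq_top _ e.range, LinearMap.range_prodMap,
    finrank_submodule_prod, Matrix.rank, Matrix.rank]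

theorem isNilpotent_of_isUpperTriangular_of_diag_eq_zero {R : Type*} [CommRing R] [Fintype n]
    [LinearOrder n] {M : Matrix n n R} (hM : M.IsUpperTriangular) (hdiag : ∀ i, M i i = 0) :
    IsNilpotent M := by
  have h := aeval_self_charpoly M
  rw [charpoly_of_isUpperTriangular M hM] at h
  exact ⟨Fintype.card n, by simpa [hdiag] using h⟩

theorem isNilpotent_kronecker {R : Type*} [CommRing R] [Fintype m] [DecidableEq m] [Fintype n]
    [DecidableEq n] {A : Matrix m m R} {B : Matrix n n R} (h : IsNilpotent A ∨ IsNilpotent B) :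
    IsNilpotent (A ⊗ₖ B) := by
  have hpow : ∀ k : ℕ, (A ⊗ₖ B) ^ k = (A ^ k) ⊗ₖ (B ^ k) := fun k => by
    induction k with
    | zero => rw [pow_zero, pow_zero, pow_zero, one_kronecker_one]
    | succ k ih => rw [pow_succ, ih, pow_succ, pow_succ, mul_kronecker_mul]
  obtain ⟨k, hk⟩ | ⟨k, hk⟩ := h
  · exact ⟨k, by rw [hpow, hk, zero_kronecker]⟩
  · exact ⟨k, by rw [hpow, hk, kronecker_zero]⟩

theorem rank_one_kronecker_sub_kronecker_of_mul_eq_one [Fintype l] [DecidableEq l] [Fintype m]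
    [DecidableEq m] [Fintype n] {C : Matrix l l K} {F G : Matrix m n K} {Z : Matrix n m K}
    (hF : F * Z = 1) (hnil : IsNilpotent C ∨ IsNilpotent (G * Z)) :
    ((1 : Matrix l l K) ⊗ₖ F - C ⊗ₖ G).rank = Fintype.card l * Fintype.card m := by
  have hmul : ((1 : Matrix l l K) ⊗ₖ F - C ⊗ₖ G) * ((1 : Matrix l l K) ⊗ₖ Z) =
      1 - C ⊗ₖ (G * Z) := by
    simp only [Matrix.sub_mul, ← mul_kronecker_mul, Matrix.mul_one, hF, one_kronecker_one]
  have hunit : IsUnit (((1 : Matrix l l K) ⊗ₖ F - C ⊗ₖ G) * ((1 : Matrix l l K) ⊗ₖ Z)) :=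
    hmul ▸ (isNilpotent_kronecker hnil).isUnit_one_sub
  rw [← Fintype.card_prod]
  refine (rank_le_card_height _).antisymm ?_
  exact (rank_of_isUnit _ hunit).symm.trans_le (rank_mul_le_left _ _)

end Rank

section KroneckerMulVec

variable {R m n o : Type*} [NonAssocSemiring R] [Fintype m] [DecidableEq m] [Fintype o]

theorem one_kronecker_mulVec_apply (A : Matrix n o R) (v : m × o → R) (x : m × n) :
    (((1 : Matrix m m R) ⊗ₖ A) *ᵥ v) x = (A *ᵥ fun q => v (x.1, q)) x.2 := by
  simp [mulVec, dotProduct, Fintype.sum_prod_type, one_apply]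

theorem kronecker_one_mulVec_apply (A : Matrix n o R) (v : o × m → R) (x : n × m) :
    ((A ⊗ₖ (1 : Matrix m m R)) *ᵥ v) x = (A *ᵥ fun q => v (q, x.2)) x.1 := by
  simp [mulVec, dotProduct, Fintype.sum_prod_type, one_apply]

end KroneckerMulVec

section CanonicalMatrices

variable {i : ℕ}

theorem Jmat_eq_smul_one_add (k : ℕ) (μ : ℂ) : Jmat k μ = μ • 1 + Jmat k 0 := by
  ext a b
  by_cases h : a = b
  · simp [Jmat, h]
  · simp [Jmat, h, Fin.val_ne_of_ne (Ne.symm h)]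

theorem isUpperTriangular_Jmat (k : ℕ) (μ : ℂ) : (Jmat k μ).IsUpperTriangular := fun a b h => by
  have hab : (b : ℕ) < a := h
  simp only [Jmat, of_apply]
  rw [if_neg (by omega), if_neg (by omega)]

theorem isNilpotent_Jmat_zero (k : ℕ) : IsNilpotent (Jmat k 0) :=
  isNilpotent_of_isUpperTriangular_of_diag_eq_zero (isUpperTriangular_Jmat k 0) fun a => by
    simp [Jmat]

theorem isUnit_det_Jmat (k : ℕ) {μ : ℂ} (hμ : μ ≠ 0) : IsUnit (Jmat k μ).det := by
  rw [det_of_isUpperTriangular (isUpperTriangular_Jmat k μ)]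
  simp [Jmat, hμ]

theorem isSymm_Jmat_submatrix_rev (k : ℕ) (μ : ℂ) :
    ((Jmat k μ).submatrix Fin.rev id).IsSymm := by
  ext a b
  simp only [Jmat, transpose_apply, submatrix_apply, of_apply, id_eq, Fin.val_rev]
  congr 1 <;> grind

theorem isSymm_one_submatrix_rev (k : ℕ) :
    ((1 : Matrix (Fin k) (Fin k) ℂ).submatrix Fin.rev id).IsSymm := by
  ext a b
  simp [one_apply, Fin.rev_eq_iff, eq_comm (a := b)]

theorem Fmat_eq_submatrix_one (k : ℕ) :
    Fmat k = (1 : Matrix (Fin (k + 1)) (Fin (k + 1)) ℂ).submatrix Fin.succ id := by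
  ext a b
  simp [Fmat, one_apply, Fin.ext_iff, eq_comm]

theorem Gmat_eq_submatrix_one (k : ℕ) :
    Gmat k = (1 : Matrix (Fin (k + 1)) (Fin (k + 1)) ℂ).submatrix Fin.castSucc id := by
  ext a b
  simp [Gmat, one_apply, Fin.ext_iff, eq_comm]

theorem Fmat_mul_transpose (k : ℕ) : Fmat k * (Fmat k)ᵀ = 1 := by
  rw [Fmat_eq_submatrix_one, transpose_submatrix, transpose_one,
    ← submatrix_mul _ _ _ _ _ Function.bijective_id, Matrix.mul_one,
    submatrix_one _ (Fin.succ_injective k)]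

theorem Gmat_mul_transpose (k : ℕ) : Gmat k * (Gmat k)ᵀ = 1 := by
  rw [Gmat_eq_submatrix_one, transpose_submatrix, transpose_one,
    ← submatrix_mul _ _ _ _ _ Function.bijective_id, Matrix.mul_one,
    submatrix_one _ (Fin.castSucc_injective k)]

theorem Gmat_mul_Fmat_transpose (k : ℕ) : Gmat k * (Fmat k)ᵀ = (Jmat k 0)ᵀ := by
  rw [Gmat_eq_submatrix_one, Fmat_eq_submatrix_one, transpose_submatrix, transpose_one,
    ← submatrix_mul _ _ _ _ _ Function.bijective_id, Matrix.mul_one]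
  ext a b
  simp only [submatrix_apply, one_apply, Fin.ext_iff, transpose_apply, Jmat, of_apply]
  grind

theorem rank_one_kronecker_Fmat_sub (C : Matrix (Fin i) (Fin i) ℂ) (k : ℕ) :
    ((1 : Matrix (Fin i) (Fin i) ℂ) ⊗ₖ Fmat k - C ⊗ₖ Gmat k).rank = i * k := by
  have hnil : IsNilpotent (Gmat k * (Fmat k)ᵀ) := by
    rw [Gmat_mul_Fmat_transpose, isNilpotent_transpose_iff]
    exact isNilpotent_Jmat_zero k
  simpa using rank_one_kronecker_sub_kronecker_of_mul_eq_one (C := C) (Fmat_mul_transpose k)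
    (.inr hnil)

theorem rank_one_kronecker_Gmat_sub {C : Matrix (Fin i) (Fin i) ℂ} (hC : IsNilpotent C) (k : ℕ) :
    ((1 : Matrix (Fin i) (Fin i) ℂ) ⊗ₖ Gmat k - C ⊗ₖ Fmat k).rank = i * k := by
  simpa using rank_one_kronecker_sub_kronecker_of_mul_eq_one (Gmat_mul_transpose k) (.inl hC)

end CanonicalMatrices

namespace Pencil

section Sylvester

variable {m n p q : ℕ}

/-- The generalized Sylvester matrix of the pencils `C - λ D` and `A - λ B`: in the column-stacking
basis it represents the operator `X ↦ A X Dᵀ - B X Cᵀ`. -/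
def sylvester (Q : Pencil p q) (P : Pencil m n) : Matrix (Fin p × Fin m) (Fin q × Fin n) ℂ :=
  Q.2 ⊗ₖ P.1 - Q.1 ⊗ₖ P.2

theorem StrictEquiv.rank_sylvester_eq {P P' : Pencil m n} (h : StrictEquiv P P')
    (Q : Pencil p q) : (sylvester Q P).rank = (sylvester Q P').rank := by
  obtain ⟨S, R, hS, hR, hA, hB⟩ := h
  have hmul : sylvester Q P' =
      ((1 : Matrix (Fin p) (Fin p) ℂ) ⊗ₖ S⁻¹) * sylvester Q P *
        ((1 : Matrix (Fin q) (Fin q) ℂ) ⊗ₖ R) := by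
    simp only [sylvester, ← hA, ← hB, Matrix.mul_sub, Matrix.sub_mul, ← mul_kronecker_mul,
      Matrix.one_mul, Matrix.mul_one]
  have hS' : IsUnit ((1 : Matrix (Fin p) (Fin p) ℂ) ⊗ₖ S⁻¹) :=
    isUnit_one.kronecker (isUnit_nonsing_inv_iff.mpr hS)
  have hR' : IsUnit ((1 : Matrix (Fin q) (Fin q) ℂ) ⊗ₖ R) := isUnit_one.kronecker hR
  rw [hmul, rank_mul_eq_left_of_isUnit_det _ _ ((isUnit_iff_isUnit_det _).mp hR'),
    rank_mul_eq_right_of_isUnit_det _ _ ((isUnit_iff_isUnit_det _).mp hS')]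

theorem rank_sylvester_cast {m' n' : ℕ} (hm : m = m') (hn : n = n') (Q : Pencil p q)
    (P : Pencil m n) : (sylvester Q (P.cast hm hn)).rank = (sylvester Q P).rank := by
  subst hm hn
  rfl

theorem rank_sylvester_dsum {m' n' : ℕ} (Q : Pencil p q) (P : Pencil m n) (P' : Pencil m' n') :
    (sylvester Q (P.dsum P')).rank = (sylvester Q P).rank + (sylvester Q P').rank := by
  let e (r s t : ℕ) : Fin r × Fin (s + t) ≃ Fin r × Fin s ⊕ Fin r × Fin t :=
    ((Equiv.refl _).prodCongr finSumFinEquiv.symm).trans (Equiv.prodSumDistrib _ _ _)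
  have hblocks : sylvester Q (P.dsum P') =
      (fromBlocks (sylvester Q P) 0 0 (sylvester Q P')).submatrix (e p m m') (e q n n') := by
    ext ⟨a, r⟩ ⟨b, c⟩
    obtain ⟨r, rfl⟩ := finSumFinEquiv.surjective r
    obtain ⟨c, rfl⟩ := finSumFinEquiv.surjective c
    rcases r with r | r <;> rcases c with c | c <;> simp [e, sylvester, dsum]
  rw [hblocks, rank_submatrix, rank_fromBlocks_zero_zero]

theorem rank_sylvester_comm (Q : Pencil p q) (P : Pencil m n) :
    (sylvester Q P).rank = (sylvester P Q).rank := by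
  have hcomm : sylvester Q P =
      (-sylvester P Q).submatrix (Equiv.prodComm _ _) (Equiv.prodComm _ _) := by
    ext x y
    simp [sylvester, mul_comm]
  rw [hcomm, rank_submatrix, rank_neg_eq_rank]

theorem rank_sylvester_swap (Q : Pencil p q) (P : Pencil m n) :
    (sylvester Q.swap P.swap).rank = (sylvester Q P).rank := by
  have hswap : sylvester Q.swap P.swap = -sylvester Q P := (neg_sub _ _).symm
  rw [hswap, rank_neg_eq_rank]

theorem transpose_sylvester (Q : Pencil p q) (P : Pencil m n) :
    (sylvester Q P)ᵀ = sylvester (Q.1ᵀ, Q.2ᵀ) (P.1ᵀ, P.2ᵀ) :=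
  rfl

theorem IsSkew.even_rank_sylvester {Q : Pencil p p} {P : Pencil n n} (hP : P.IsSkew)
    (hC : Q.1.IsSymm) (hD : Q.2.IsSymm) : Even (sylvester Q P).rank := by
  refine even_rank_of_transpose_eq_neg ?_
  rw [transpose_sylvester, hC.eq, hD.eq, hP.1, hP.2]
  ext x y
  simp only [sylvester, Matrix.sub_apply, Matrix.neg_apply, kroneckerMap_apply]
  ring

end Sylvester

end Pencil

open Pencil

section Hankel

variable {i k : ℕ}

/-- The `i × k` Hankel matrices with zeros from the antidiagonal of index `min i k` on, as a
linear function of their first `min i k` antidiagonal entries. -/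
def truncatedHankel (i k : ℕ) : (Fin (min i k) → ℂ) →ₗ[ℂ] (Fin i × Fin k → ℂ) :=
  LinearMap.funLeft ℂ ℂ (fun x => (x.1 : ℕ) + x.2) ∘ₗ Function.ExtendByZero.linearMap ℂ Fin.val

theorem extend_val_eq_zero {M : Type*} [Zero M] {n : ℕ} (c : Fin n → M) {s : ℕ} (hs : n ≤ s) :
    Function.extend Fin.val c (0 : ℕ → M) s = 0 :=
  Function.extend_apply' c (0 : ℕ → M) s fun ⟨a, ha⟩ => (ha ▸ a.2).not_ge hs

theorem truncatedHankel_injective (i k : ℕ) :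
    Function.Injective (truncatedHankel i k) := fun c d h => by
  ext s
  have hs := congrFun h
    (⟨s, s.2.trans_le (min_le_left i k)⟩, ⟨0, s.pos.trans_le (min_le_right i k)⟩)
  simpa [truncatedHankel, LinearMap.funLeft_apply, Fin.val_injective.extend_apply] using hs

theorem Jmat_zero_mulVec_apply {f : ℕ → ℂ} (hf : f k = 0) (p : Fin k) :
    (Jmat k 0 *ᵥ fun q => f q) p = f (p + 1) := by
  simp only [mulVec, dotProduct, Jmat, of_apply]
  by_cases hp : (p : ℕ) + 1 < k
  · rw [Finset.sum_eq_single ⟨p + 1, hp⟩] <;> grind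
  · rw [Finset.sum_eq_zero] <;> grind

theorem sylvester_Eblk_zero_mulVec_apply {V : ℕ → ℕ → ℂ} (hi : ∀ p, V i p = 0)
    (hk : ∀ a, V a k = 0) (x : Fin i × Fin k) :
    (sylvester (Eblk i 0) (Eblk k 0) *ᵥ fun y => V y.1 y.2) x =
      V x.1 (x.2 + 1) - V (x.1 + 1) x.2 := by
  rw [sylvester, sub_mulVec, Pi.sub_apply]
  exact congrArg₂ (· - ·)
    ((one_kronecker_mulVec_apply _ _ x).trans (Jmat_zero_mulVec_apply (hk x.1) x.2))
    ((kronecker_one_mulVec_apply _ _ x).trans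
      (Jmat_zero_mulVec_apply (f := (V · x.2)) (hi x.2) x.1))

theorem sylvester_Eblk_zero_mulVec_eq_zero_iff {V : ℕ → ℕ → ℂ} (hi : ∀ a p, i ≤ a → V a p = 0)
    (hk : ∀ a p, k ≤ p → V a p = 0) :
    sylvester (Eblk i 0) (Eblk k 0) *ᵥ (fun y => V y.1 y.2) = 0 ↔
      ∀ a p, V a (p + 1) = V (a + 1) p := by
  have happly := sylvester_Eblk_zero_mulVec_apply (hi i · le_rfl) (hk · k le_rfl)
  refine ⟨fun h a p => ?_, fun h => funext fun x => by simp [happly, h]⟩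
  by_cases hap : a < i ∧ p < k
  · exact sub_eq_zero.mp ((happly (⟨a, hap.1⟩, ⟨p, hap.2⟩)).symm.trans (congrFun h _))
  · obtain ha | hp : i ≤ a ∨ k ≤ p := by omega
    · rw [hi _ _ ha, hi _ _ (by omega)]
    · rw [hk _ _ hp, hk _ _ (by omega)]

theorem eq_apply_add_zero_of_shift {V : ℕ → ℕ → ℂ} (h : ∀ a p, V a (p + 1) = V (a + 1) p)
    (a p : ℕ) : V a p = V (a + p) 0 := by
  induction p generalizing a with
  | zero => rfl
  | succ p ih => rw [h, ih, Nat.add_right_comm, Nat.add_assoc]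

theorem exists_truncatedHankel_eq {V : ℕ → ℕ → ℂ} (hi : ∀ a p, i ≤ a → V a p = 0)
    (hk : ∀ a p, k ≤ p → V a p = 0) (h : ∀ a p, V a (p + 1) = V (a + 1) p) :
    ∃ c, truncatedHankel i k c = fun x => V x.1 x.2 := by
  have hHankel := eq_apply_add_zero_of_shift h
  refine ⟨fun s => V s 0, funext fun x => ?_⟩
  simp only [truncatedHankel, LinearMap.comp_apply, LinearMap.funLeft_apply,
    Function.ExtendByZero.linearMap_apply]
  rw [hHankel (x.1 : ℕ) x.2]
  by_cases hs : (x.1 : ℕ) + x.2 < min i k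
  · exact Fin.val_injective.extend_apply (fun s : Fin (min i k) => V s 0) 0 ⟨_, hs⟩
  · rw [extend_val_eq_zero _ (not_lt.mp hs)]
    obtain hs | hs := min_le_iff.mp (not_lt.mp hs)
    · exact (hi _ _ hs).symm
    · rw [← zero_add (_ + _), ← hHankel, hk _ _ hs]

theorem range_truncatedHankel (i k : ℕ) :
    (truncatedHankel i k).range = (sylvester (Eblk i 0) (Eblk k 0)).mulVecLin.ker := by
  refine le_antisymm ?_ fun v hv => ?_
  · rintro _ ⟨c, rfl⟩
    have hzero : ∀ s, min i k ≤ s → Function.extend Fin.val c (0 : ℕ → ℂ) s = 0 :=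
      fun s => extend_val_eq_zero c
    refine (sylvester_Eblk_zero_mulVec_eq_zero_iff
      (V := fun a p => Function.extend Fin.val c 0 (a + p)) (fun a p ha => hzero _ (by omega))
      fun a p hp => hzero _ (by omega)).mpr fun a p => ?_
    rw [Nat.add_right_comm, Nat.add_assoc]
  · let V : ℕ → ℕ → ℂ := fun a p => if h : a < i ∧ p < k then v (⟨a, h.1⟩, ⟨p, h.2⟩) else 0
    have hi : ∀ a p, i ≤ a → V a p = 0 := fun a p h => dif_neg (by omega)
    have hk : ∀ a p, k ≤ p → V a p = 0 := fun a p h => dif_neg (by omega)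
    have hvV : v = fun x => V x.1 x.2 := funext fun x => by simp [V]
    rw [hvV] at hv ⊢
    exact exists_truncatedHankel_eq hi hk ((sylvester_Eblk_zero_mulVec_eq_zero_iff hi hk).mp hv)

theorem rank_sylvester_Eblk_zero_add_min (i k : ℕ) :
    (sylvester (Eblk i 0) (Eblk k 0)).rank + min i k = i * k := by
  have hker := LinearMap.finrank_range_of_inj (truncatedHankel_injective i k)
  rw [range_truncatedHankel, finrank_fin_fun] at hker
  have hrank := (sylvester (Eblk i 0) (Eblk k 0)).mulVecLin.finrank_range_add_finrank_ker
  simpa [Matrix.rank, hker] using hrank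

end Hankel

section JordanBlocks

/-- The Jordan block `E_k(μ)` for `μ ∈ ℂ ∪ {∞}`, where `none` encodes `∞`. Unlike
`(Eb μ k).toPencil`, its dimensions are `k` by definition. -/
def jordanBlk : Option ℂ → (k : ℕ) → Pencil k k
  | some μ, k => Eblk k μ
  | none, k => EInfblk k

theorem isSymm_jordanBlk_submatrix_rev (μ : Option ℂ) (k : ℕ) :
    ((jordanBlk μ k).1.submatrix Fin.rev id).IsSymm ∧
      ((jordanBlk μ k).2.submatrix Fin.rev id).IsSymm := by
  cases μ with
  | none => exact ⟨isSymm_one_submatrix_rev k, isSymm_Jmat_submatrix_rev k 0⟩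
  | some μ => exact ⟨isSymm_Jmat_submatrix_rev k μ, isSymm_one_submatrix_rev k⟩

theorem Pencil.IsSkew.even_rank_sylvester_jordanBlk {n : ℕ} {P : Pencil n n} (hP : P.IsSkew)
    (μ : Option ℂ) (k : ℕ) : Even (sylvester (jordanBlk μ k) P).rank := by
  obtain ⟨hC, hD⟩ := isSymm_jordanBlk_submatrix_rev μ k
  have heven := hP.even_rank_sylvester (Q := (_, _)) hC hD
  have hrank := rank_submatrix (sylvester (jordanBlk μ k) P)
    (Fin.revPerm.prodCongr (Equiv.refl _)) (Equiv.refl _)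
  exact hrank ▸ heven

theorem rank_sylvester_jordanBlk_Lblk (μ : Option ℂ) (i k : ℕ) :
    (sylvester (jordanBlk μ i) (Lblk k)).rank = i * k := by
  cases μ with
  | none =>
    rw [← rank_sylvester_swap]
    exact rank_one_kronecker_Gmat_sub (isNilpotent_Jmat_zero i) k
  | some μ => exact rank_one_kronecker_Fmat_sub (Jmat i μ) k

theorem rank_sylvester_jordanBlk_LTblk (μ : Option ℂ) (i k : ℕ) :
    (sylvester (jordanBlk μ i) (LTblk k)).rank = i * k := by
  cases μ with
  | none =>
    rw [← rank_sylvester_swap, ← rank_transpose, transpose_sylvester]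
    have hnil := isNilpotent_transpose_iff.mpr (isNilpotent_Jmat_zero i)
    simpa [sylvester, jordanBlk, EInfblk, LTblk] using rank_one_kronecker_Gmat_sub hnil k
  | some μ =>
    rw [← rank_transpose, transpose_sylvester]
    simpa [sylvester, jordanBlk, Eblk, LTblk] using rank_one_kronecker_Fmat_sub (Jmat i μ)ᵀ k

theorem rank_sylvester_jordanBlk_self_add_min (μ : Option ℂ) (i k : ℕ) :
    (sylvester (jordanBlk μ i) (jordanBlk μ k)).rank + min i k = i * k := by
  rw [← rank_sylvester_Eblk_zero_add_min]
  cases μ with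
  | none => rw [← rank_sylvester_swap]; rfl
  | some μ =>
    have hshift : sylvester (Eblk i μ) (Eblk k μ) = sylvester (Eblk i 0) (Eblk k 0) := by
      simp only [sylvester, Eblk]
      rw [Jmat_eq_smul_one_add k, Jmat_eq_smul_one_add i, kronecker_add, add_kronecker,
        kronecker_smul, smul_kronecker, add_sub_add_left_eq_sub]
    rw [jordanBlk, jordanBlk, hshift]

theorem rank_sylvester_Eblk_of_ne {μ ν : ℂ} (h : μ ≠ ν) (i k : ℕ) :
    (sylvester (Eblk i μ) (Eblk k ν)).rank = i * k := by
  have hshift : sylvester (Eblk i μ) (Eblk k ν) = 1 ⊗ₖ Jmat k (ν - μ) - Jmat i 0 ⊗ₖ 1 := by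
    simp only [sylvester, Eblk]
    rw [Jmat_eq_smul_one_add k, Jmat_eq_smul_one_add i, Jmat_eq_smul_one_add k (ν - μ)]
    simp only [kronecker_add, add_kronecker, kronecker_smul, smul_kronecker]
    module
  have hinv := mul_nonsing_inv _ (isUnit_det_Jmat k (sub_ne_zero.mpr h.symm))
  rw [hshift]
  simpa using rank_one_kronecker_sub_kronecker_of_mul_eq_one hinv (.inl (isNilpotent_Jmat_zero i))

theorem rank_sylvester_Eblk_EInfblk (μ : ℂ) (i k : ℕ) :
    (sylvester (Eblk i μ) (EInfblk k)).rank = i * k := by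
  have hnil : IsNilpotent (Jmat k 0 * 1) := by
    rw [Matrix.mul_one]
    exact isNilpotent_Jmat_zero k
  simpa [sylvester, Eblk, EInfblk] using rank_one_kronecker_sub_kronecker_of_mul_eq_one
    (C := Jmat i μ) (Matrix.mul_one 1) (.inr hnil)

theorem rank_sylvester_jordanBlk_of_ne {μ ν : Option ℂ} (h : μ ≠ ν) (i k : ℕ) :
    (sylvester (jordanBlk μ i) (jordanBlk ν k)).rank = i * k := by
  match μ, ν with
  | none, none => exact absurd rfl h
  | none, some ν =>
    rw [rank_sylvester_comm, mul_comm]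
    exact rank_sylvester_Eblk_EInfblk ν k i
  | some μ, none => exact rank_sylvester_Eblk_EInfblk μ i k
  | some μ, some ν => exact rank_sylvester_Eblk_of_ne (by simpa using h) i k

end JordanBlocks

section WeyrCharacteristic

theorem jW_cons (b : KBlock) (s : Multiset KBlock) (μ : Option ℂ) (i : ℕ) :
    jW (b ::ₘ s) μ i = jW {b} μ i + jW s μ i := by
  simp only [jW, ← Multiset.singleton_add, Multiset.filter_add, Multiset.card_add]

theorem jW_singleton_Eb (μ ν : Option ℂ) (i k : ℕ) :
    jW {Eb ν k} μ i = if ν = μ ∧ i ≤ k then 1 else 0 := by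
  have hiff : (∃ a, Eb ν k = Eb μ a ∧ i ≤ a) ↔ ν = μ ∧ i ≤ k := by
    cases μ <;> cases ν <;> simp [Eb, and_comm]
  simp only [jW, Multiset.filter_singleton, hiff]
  split_ifs <;> rfl

theorem rank_sylvester_jordanBlk_succ (μ ν : Option ℂ) (i k : ℕ) :
    (sylvester (jordanBlk μ (i + 1)) (jordanBlk ν k)).rank + jW {Eb ν k} μ (i + 1) =
      (sylvester (jordanBlk μ i) (jordanBlk ν k)).rank + k := by
  rw [jW_singleton_Eb]
  by_cases h : ν = μ
  · subst h
    have hsucc := rank_sylvester_jordanBlk_self_add_min ν (i + 1) k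
    have hself := rank_sylvester_jordanBlk_self_add_min ν i k
    rw [Nat.succ_mul] at hsucc
    simp only [true_and]
    split_ifs <;> omega
  · rw [rank_sylvester_jordanBlk_of_ne (Ne.symm h), rank_sylvester_jordanBlk_of_ne (Ne.symm h),
      if_neg (fun hk => h hk.1), Nat.succ_mul, add_zero]

theorem rank_sylvester_toPencil_succ (μ : Option ℂ) (i : ℕ) (b : KBlock) :
    (sylvester (jordanBlk μ (i + 1)) b.toPencil).rank + jW {b} μ (i + 1) =
      (sylvester (jordanBlk μ i) b.toPencil).rank + b.idx := by
  cases b with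
  | E k ν => exact rank_sylvester_jordanBlk_succ μ (some ν) i k
  | Einf k => exact rank_sylvester_jordanBlk_succ μ none i k
  | L k =>
    have hj : jW {KBlock.L k} μ (i + 1) = 0 := by cases μ <;> simp [jW, Eb]
    have hrank : ∀ j, (sylvester (jordanBlk μ j) (KBlock.L k).toPencil).rank = j * k :=
      fun j => rank_sylvester_jordanBlk_Lblk μ j k
    rw [hrank, hrank, hj, Nat.succ_mul, KBlock.idx, add_zero]
  | LT k =>
    have hj : jW {KBlock.LT k} μ (i + 1) = 0 := by cases μ <;> simp [jW, Eb]
    have hrank : ∀ j, (sylvester (jordanBlk μ j) (KBlock.LT k).toPencil).rank = j * k :=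
      fun j => rank_sylvester_jordanBlk_LTblk μ j k
    rw [hrank, hrank, hj, Nat.succ_mul, KBlock.idx, add_zero]

theorem rank_sylvester_pencilOfList_succ (μ : Option ℂ) (i : ℕ) (l : List KBlock) :
    (sylvester (jordanBlk μ (i + 1)) (pencilOfList l)).rank + jW l μ (i + 1) =
      (sylvester (jordanBlk μ i) (pencilOfList l)).rank + (l.map KBlock.idx).sum := by
  induction l with
  | nil =>
    have hrank : ∀ j, (sylvester (jordanBlk μ j) (pencilOfList [])).rank = 0 := fun j =>
      Nat.le_zero.mp ((rank_le_card_height _).trans_eq (by rw [Fintype.card_prod]; rfl))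
    simp [hrank, jW]
  | cons b t ih =>
    have hrank : ∀ j, (sylvester (jordanBlk μ j) (pencilOfList (b :: t))).rank =
        (sylvester (jordanBlk μ j) b.toPencil).rank +
          (sylvester (jordanBlk μ j) (pencilOfList t)).rank := fun j =>
      rank_sylvester_dsum _ _ _
    have hb := rank_sylvester_toPencil_succ μ i b
    rw [← Multiset.cons_coe, jW_cons, List.map_cons, List.sum_cons, hrank, hrank]
    omega

theorem jW_eq_zero_of_forall_idx_lt {s : Multiset KBlock} {i : ℕ} (hi : ∀ b ∈ s, b.idx < i)
    (μ : Option ℂ) : jW s μ i = 0 := by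
  rw [jW, Multiset.card_eq_zero, Multiset.filter_eq_nil]
  rintro _ hb ⟨a, rfl, ha⟩
  have hidx : (Eb μ a).idx = a := by cases μ <;> rfl
  exact (hi _ hb).not_ge (ha.trans_eq hidx.symm)

end WeyrCharacteristic

/-- **Lemma 2.9**: for a skew-symmetric pencil `P`, every entry `j_i^μ(P)`,
`i ≥ 1`, of the Weyr characteristic of any eigenvalue `μ ∈ ℂ ∪ {∞}` is even;
that is, the number of blocks `E_k(μ)` with `k ≥ i` in the Kronecker canonical
form of `P` is even. -/
theorem jW_even_of_isSkew {n : ℕ} (P : Pencil n n) (hP : Pencil.IsSkew P)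
    (s : Multiset KBlock) (hs : RepresentsE P s) (μ : Option ℂ) (i : ℕ) (hi : 1 ≤ i) :
    Even (jW s μ i) := by
  obtain ⟨-, l, hm, hn, rfl, hl⟩ := hs
  have hrank : ∀ j, Even (sylvester (jordanBlk μ j) (pencilOfList l)).rank := fun j => by
    rw [← rank_sylvester_cast hm hn, hl.rank_sylvester_eq]
    exact hP.even_rank_sylvester_jordanBlk μ j
  have hparity : ∀ j, Even (jW l μ (j + 1)) ↔ Even (l.map KBlock.idx).sum := fun j => by
    have h := congrArg Even (rank_sylvester_pencilOfList_succ μ j l)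
    simpa only [Nat.even_add, hrank, true_iff, eq_iff_iff] using h
  have hzero : jW l μ ((l.map KBlock.idx).sum + 1) = 0 :=
    jW_eq_zero_of_forall_idx_lt (fun b hb => Nat.lt_succ_of_le
      (List.single_le_sum (fun _ _ => Nat.zero_le _) _ (List.mem_map_of_mem hb))) μ
  obtain ⟨j, rfl⟩ := Nat.exists_eq_add_of_le' hi
  rw [hparity j, ← hparity, hzero]
  exact Even.zero
end
end
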